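/- arXiv:0811.1290 — 2 statements merged into one kernel-verified Lean document; each statement's English description precedes it below -/
import Mathlib

section
/- Let β be a dimension vector of Q and σ ∈ ℤ^{Q_0} an integral weight. Then there exists a σ-stable representation of Q of dimension vector β if and only if β is non-zero, σ(β)=0, and σ(β')<0 for every dimension vector β' with β' ↪ β and β' ≠ 0, β. -/
set_option autoImplicit false

noncomputable section

open scoped BigOperators

/-! Basic setup for representations of a quiver with vertex set `V`, arrow set `A`,
tail map `t` and head map `h`, over a field `K`. -/

variable (K : Type) [Field K]
variable {V A : Type} [Fintype V] [DecidableEq V] [Fintype A]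

/-- The Euler form of the quiver `(V, A, t, h)`. -/
def eulerForm {R : Type} [CommRing R] (t h : A → V) (x y : V → R) : R :=
  ∑ i, x i * y i - ∑ a, x (t a) * y (h a)

def natZ (x : V → ℕ) : V → ℤ := fun i => (x i : ℤ)
def intQ (x : V → ℤ) : V → ℚ := fun i => (x i : ℚ)
def natQ (x : V → ℕ) : V → ℚ := fun i => (x i : ℚ)

/-- The weight `⟨α,·⟩`. -/
def weightL (t h : A → V) (α : V → ℤ) : V → ℤ :=
  fun i => eulerForm t h α (fun j => if j = i then 1 else 0)

/-- The weight `−⟨·,α⟩`. -/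
def weightR (t h : A → V) (α : V → ℤ) : V → ℤ :=
  fun i => - eulerForm t h (fun j => if j = i then 1 else 0) α

/-- `IsPathFrom t h i p j` : the list of arrows `p` is a path from `i` to `j`. -/
def IsPathFrom (t h : A → V) : V → List A → V → Prop
  | i, [], j => i = j
  | i, a :: p, j => t a = i ∧ IsPathFrom t h (h a) p j

/-- The quiver has no (nontrivial) oriented cycles. -/
def Acyclic (t h : A → V) : Prop := ∀ (i : V) (p : List A), IsPathFrom t h i p i → p = []

/-- The dimension vector `γ_i` of the projective indecomposable at `i`:
`γ_i(j)` is the number of paths from `i` to `j`. -/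
def gammaRoot (t h : A → V) (i : V) : V → ℕ :=
  fun j => Set.ncard {p : List A | IsPathFrom t h i p j}

/-- A finite-dimensional representation of the quiver `(V, A, t, h)` over `K`. -/
structure QuivRep (K : Type) [Field K] (V A : Type) (t h : A → V) : Type 1 where
  sp : V → Type
  [inst1 : ∀ i, AddCommGroup (sp i)]
  [inst2 : ∀ i, Module K (sp i)]
  [inst3 : ∀ i, FiniteDimensional K (sp i)]
  map : ∀ a : A, sp (t a) →ₗ[K] sp (h a)

attribute [instance] QuivRep.inst1 QuivRep.inst2 QuivRep.inst3

namespace QuivRep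

variable {K} {t h : A → V}

/-- The dimension vector of a representation. -/
def dimVec (X : QuivRep K V A t h) : V → ℕ := fun i => Module.finrank K (X.sp i)

/-- A subrepresentation. -/
structure Sub (X : QuivRep K V A t h) where
  sub : ∀ i, Submodule K (X.sp i)
  le : ∀ a : A, ∀ x ∈ sub (t a), X.map a x ∈ sub (h a)

/-- The dimension vector of a subrepresentation. -/
def Sub.dimVec {X : QuivRep K V A t h} (U : Sub X) : V → ℕ :=
  fun i => Module.finrank K (U.sub i)

/-- The space `Hom_Q(X,Y)` of morphisms of representations, as a submodule of
`Π i, Hom_K(X(i),Y(i))`. -/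
def homS (X Y : QuivRep K V A t h) : Submodule K (∀ i, X.sp i →ₗ[K] Y.sp i) where
  carrier := {φ | ∀ a : A, (φ (h a)).comp (X.map a) = (Y.map a).comp (φ (t a))}
  zero_mem' := by intro a; simp
  add_mem' := by
    intro f g hf hg a
    simp only [Pi.add_apply, LinearMap.add_comp, LinearMap.comp_add, hf a, hg a]
  smul_mem' := by
    intro c f hf a
    simp only [Pi.smul_apply, LinearMap.smul_comp, LinearMap.comp_smul, hf a]

/-- The dimension of `Hom_Q(X,Y)`. -/
def homDim (X Y : QuivRep K V A t h) : ℕ := Module.finrank K (homS X Y)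

/-- The map `d^X_Y` from Ringel's canonical exact sequence. -/
def dmap (X Y : QuivRep K V A t h) :
    (∀ i, X.sp i →ₗ[K] Y.sp i) →ₗ[K] (∀ a : A, X.sp (t a) →ₗ[K] Y.sp (h a)) where
  toFun φ := fun a => (φ (h a)).comp (X.map a) - (Y.map a).comp (φ (t a))
  map_add' f g := by
    funext a
    simp only [Pi.add_apply, LinearMap.add_comp, LinearMap.comp_add]
    abel
  map_smul' c f := by
    funext a
    simp only [Pi.smul_apply, LinearMap.smul_comp, LinearMap.comp_smul, smul_sub,
      RingHom.id_apply]

/-- The dimension of `Ext^1_Q(X,Y)`, i.e. of the cokernel of `d^X_Y`. -/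
def extDim (X Y : QuivRep K V A t h) : ℕ :=
  Module.finrank K ((∀ a : A, X.sp (t a) →ₗ[K] Y.sp (h a)) ⧸ LinearMap.range (dmap X Y))

/-- A rigid representation: `Ext^1_Q(X,X) = 0`. -/
def IsRigid (X : QuivRep K V A t h) : Prop := extDim X X = 0

/-- A Schur representation: `End_Q(X) = K·id`. -/
def IsSchur (X : QuivRep K V A t h) : Prop := homDim X X = 1

/-- An exceptional representation: rigid and Schur. -/
def IsExceptional (X : QuivRep K V A t h) : Prop := IsRigid X ∧ IsSchur X

end QuivRep

/-- `β` is a real Schur root: the dimension vector of an exceptional representation. -/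
def isRealSchurRoot (t h : A → V) (β : V → ℕ) : Prop :=
  ∃ X : QuivRep K V A t h, X.dimVec = β ∧ X.IsExceptional

/-- `ext_Q(α,β)` : the generic (minimal) value of `dim Ext^1_Q` on pairs of
representations of dimension vectors `α`, `β`. -/
def extMin (t h : A → V) (α β : V → ℕ) : ℕ :=
  sInf {n | ∃ X Y : QuivRep K V A t h, X.dimVec = α ∧ Y.dimVec = β ∧ QuivRep.extDim X Y = n}

/-- `hom_Q(α,β)` : the generic (minimal) value of `dim Hom_Q`. -/
def homMin (t h : A → V) (α β : V → ℕ) : ℕ :=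
  sInf {n | ∃ X Y : QuivRep K V A t h, X.dimVec = α ∧ Y.dimVec = β ∧ QuivRep.homDim X Y = n}

/-- `β' ↪ β` : every representation of dimension vector `β` has a subrepresentation of
dimension vector `β'`. -/
def Embeds (t h : A → V) (β' β : V → ℕ) : Prop :=
  ∀ X : QuivRep K V A t h, X.dimVec = β → ∃ U : QuivRep.Sub X, U.dimVec = β'

/-- `σ`-semi-stability of a representation. -/
def IsSemistable {t h : A → V} (σ : V → ℤ) (X : QuivRep K V A t h) : Prop :=
  (∑ i, σ i * (X.dimVec i : ℤ)) = 0 ∧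
  ∀ U : QuivRep.Sub X, (∑ i, σ i * (U.dimVec i : ℤ)) ≤ 0

/-- `σ`-stability of a representation. -/
def IsStable {t h : A → V} (σ : V → ℤ) (X : QuivRep K V A t h) : Prop :=
  (∑ i, σ i * (X.dimVec i : ℤ)) = 0 ∧ X.dimVec ≠ (fun _ => 0) ∧
  ∀ U : QuivRep.Sub X, U.dimVec ≠ (fun _ => 0) → U.dimVec ≠ X.dimVec →
    (∑ i, σ i * (U.dimVec i : ℤ)) < 0

/-- Isomorphism of representations. -/
def RepIso {t h : A → V} (X Y : QuivRep K V A t h) : Prop :=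
  ∃ e : ∀ i, X.sp i ≃ₗ[K] Y.sp i,
    ∀ (a : A) (x : X.sp (t a)), e (h a) (X.map a x) = Y.map a (e (t a) x)

/-- A quiver exceptional sequence of dimension vectors. -/
def IsQES (t h : A → V) {l : ℕ} (b : Fin l → V → ℕ) : Prop :=
  (∀ j, isRealSchurRoot K t h (b j)) ∧
  ∀ i j : Fin l, i < j →
    homMin K t h (b i) (b j) = 0 ∧ extMin K t h (b i) (b j) = 0 ∧
      eulerForm t h (natZ (b j)) (natZ (b i)) ≤ 0

/-- The cone of nonnegative rational linear combinations of a finite set of integral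
vectors. -/
def coneOf (C : Finset (V → ℤ)) : Set (V → ℚ) :=
  {x | ∃ lam : (V → ℤ) → ℚ, (∀ c, 0 ≤ lam c) ∧ x = ∑ c ∈ C, lam c • intQ c}

/-- A compatible subset of the set `Ψ(Q)_{≥ -1}` of almost positive real Schur roots. -/
def IsCompatible (t h : A → V) (C : Finset (V → ℤ)) : Prop :=
  (∀ x ∈ C, (∃ β : V → ℕ, isRealSchurRoot K t h β ∧ x = natZ β) ∨
      (∃ i : V, x = fun j => -(gammaRoot t h i j : ℤ))) ∧
  (∀ x ∈ C, ∀ y ∈ C, x ≠ y →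
    (∀ β₁ β₂ : V → ℕ, isRealSchurRoot K t h β₁ → isRealSchurRoot K t h β₂ →
      x = natZ β₁ → y = natZ β₂ → extMin K t h β₁ β₂ = 0) ∧
    (∀ (β : V → ℕ) (i : V), isRealSchurRoot K t h β →
      x = natZ β → y = (fun j => -(gammaRoot t h i j : ℤ)) → β i = 0))

/-- The domain of semi-invariants `D(β) ⊆ ℚ^{Q_0}`. -/
def Dom (t h : A → V) (β : V → ℕ) : Set (V → ℚ) :=
  {x | eulerForm t h x (natQ β) = 0 ∧
    ∀ β' : V → ℕ, Embeds K t h β' β → eulerForm t h x (natQ β') ≤ 0}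

/-- A quiver exceptional set: a subset of `Ψ(Q)_{≥ -1}` of the form
`{β_1,…,β_l, −γ_{i_{l+1}},…,−γ_{i_m}}` with `β_j(i_k) = 0` and whose real-Schur-root part
can be ordered into a quiver exceptional sequence. -/
def IsQExcSet (t h : A → V) (E : Finset (V → ℤ)) : Prop :=
  ∃ (l m : ℕ) (b : Fin l → V → ℕ) (g : Fin m → V),
    Function.Injective b ∧ Function.Injective g ∧ IsQES K t h b ∧
    (∀ j k, b j (g k) = 0) ∧
    (E : Set (V → ℤ)) =
      (Set.range fun j => natZ (b j)) ∪
      (Set.range fun k => (fun v => -(gammaRoot t h (g k) v : ℤ)))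


/-- The underlying graph of the quiver is connected. -/
def IsConnectedQuiver (t h : A → V) : Prop :=
  ∀ i j : V,
    Relation.ReflTransGen (fun u v => ∃ a, (t a = u ∧ h a = v) ∨ (t a = v ∧ h a = u)) i j

/-- Morphisms of representations. -/
structure RepHom {K : Type} [Field K] {V A : Type} {t h : A → V}
    (X Y : QuivRep K V A t h) : Type where
  app : ∀ i, X.sp i →ₗ[K] Y.sp i
  comm : ∀ a : A, (app (h a)).comp (X.map a) = (Y.map a).comp (app (t a))

namespace RepHom

variable {K₀ : Type} [Field K₀] {t h : A → V}

/-- The identity morphism. -/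
def idHom (X : QuivRep K₀ V A t h) : RepHom X X :=
  ⟨fun _ => LinearMap.id, fun a => by ext x; simp⟩

/-- Composition of morphisms. -/
def comp {X Y Z : QuivRep K₀ V A t h} (f : RepHom X Y) (g : RepHom Y Z) : RepHom X Z :=
  ⟨fun i => (g.app i).comp (f.app i), fun a => by
    ext x
    have hf := LinearMap.congr_fun (f.comm a) x
    have hg := LinearMap.congr_fun (g.comm a) (f.app (t a) x)
    simp only [LinearMap.comp_apply] at hf hg ⊢
    rw [hf, hg]⟩

/-- Sum of morphisms. -/
def add {X Y : QuivRep K₀ V A t h} (f g : RepHom X Y) : RepHom X Y :=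
  ⟨fun i => f.app i + g.app i, fun a => by
    simp only [LinearMap.add_comp, LinearMap.comp_add, f.comm a, g.comm a]⟩

/-- Scalar multiple of a morphism. -/
def smul {X Y : QuivRep K₀ V A t h} (c : K₀) (f : RepHom X Y) : RepHom X Y :=
  ⟨fun i => c • f.app i, fun a => by
    simp only [LinearMap.smul_comp, LinearMap.comp_smul, f.comm a]⟩

end RepHom

/-- The number of arrows `i → j` in the Ext-quiver `Q(𝓔)` of a sequence of dimension
vectors: `−⟨β_i, β_j⟩` for `i ≠ j`. -/
def extMult (t h : A → V) {l : ℕ} (b : Fin l → V → ℕ) (i j : Fin l) : ℕ :=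
  if i = j then 0 else (-(eulerForm t h (natZ (b i)) (natZ (b j)))).toNat

/-- The arrow set of the Ext-quiver `Q(𝓔)`. -/
abbrev ExtArrow (t h : A → V) {l : ℕ} (b : Fin l → V → ℕ) : Type :=
  (i : Fin l) × (j : Fin l) × Fin (extMult t h b i j)

/-- The representation space `rep(Q,β)` as a product of matrix spaces. -/
abbrev RepSpace (t h : A → V) (β : V → ℕ) : Type :=
  ∀ a : A, Matrix (Fin (β (h a))) (Fin (β (t a))) K

/-- The (base-change) action of `GL(β)` on `rep(Q,β)`. -/
def glAct (t h : A → V) {β : V → ℕ}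
    (g : ∀ i, Matrix.GeneralLinearGroup (Fin (β i)) K) (W : RepSpace K t h β) :
    RepSpace K t h β :=
  fun a => (g (h a) : Matrix (Fin (β (h a))) (Fin (β (h a))) K) * W a *
    (((g (t a))⁻¹ : Matrix.GeneralLinearGroup (Fin (β (t a))) K) :
      Matrix (Fin (β (t a))) (Fin (β (t a))) K)

/-- A polynomial function on `rep(Q,β)`. -/
def IsPolyFun (t h : A → V) {β : V → ℕ} (f : RepSpace K t h β → K) : Prop :=
  ∃ P : MvPolynomial ((a : A) × (Fin (β (h a)) × Fin (β (t a)))) K,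
    ∀ W, f W = MvPolynomial.eval (fun x => W x.1 x.2.1 x.2.2) P

/-- The weight space `SI(Q,β)_σ` of semi-invariant polynomial functions of weight `σ`. -/
def SIweight (t h : A → V) (β : V → ℕ) (σ : V → ℤ) :
    Submodule K (RepSpace K t h β → K) where
  carrier := {f | IsPolyFun K t h f ∧
    ∀ (g : ∀ i, Matrix.GeneralLinearGroup (Fin (β i)) K) (W : RepSpace K t h β),
      f (glAct K t h g W) =
        (((∏ i, (Matrix.GeneralLinearGroup.det (g i)) ^ σ i : Kˣ) : K)) * f W}
  zero_mem' := by
    refine ⟨⟨0, by simp⟩, by simp⟩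
  add_mem' := by
    rintro f g ⟨⟨P, hP⟩, hf⟩ ⟨⟨Q, hQ⟩, hg⟩
    refine ⟨⟨P + Q, fun W => ?_⟩, fun gg W => ?_⟩
    · simp [hP W, hQ W]
    · simp only [Pi.add_apply, hf gg W, hg gg W]; ring
  smul_mem' := by
    rintro c f ⟨⟨P, hP⟩, hf⟩
    refine ⟨⟨MvPolynomial.C c * P, fun W => ?_⟩, fun gg W => ?_⟩
    · simp [hP W]
    · simp only [Pi.smul_apply, hf gg W, smul_eq_mul]; ring

/-- Entry of a matrix accessed through natural-number indices. -/
def entryN {m n : ℕ} (M : Matrix (Fin m) (Fin n) K) (r c : ℕ) : K :=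
  if hr : r < m then (if hc : c < n then M ⟨r, hr⟩ ⟨c, hc⟩ else 0) else 0

/-- The matrix of the map `d^V_W` (with `V` of dimension vector `α` varying and `W` of
dimension vector `w` fixed), in the standard bases. -/
def schofieldMatrix (t h : A → V) {α w : V → ℕ}
    (Vm : RepSpace K t h α) (W : RepSpace K t h w) :
    Matrix ((a : A) × (Fin (w (h a)) × Fin (α (t a)))) ((i : V) × (Fin (w i) × Fin (α i))) K :=
  fun r c =>
    (if c.1 = h r.1 ∧ (c.2.1 : ℕ) = (r.2.1 : ℕ) then
      entryN K (Vm r.1) (c.2.2 : ℕ) (r.2.2 : ℕ) else 0)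
    - (if c.1 = t r.1 ∧ (c.2.2 : ℕ) = (r.2.2 : ℕ) then
      entryN K (W r.1) (r.2.1 : ℕ) (c.2.1 : ℕ) else 0)

/-- The Schofield semi-invariant `c_W : rep(Q,α) → K`, `V ↦ det d^V_W` (defined when
`⟨α, dim W⟩ = 0`, i.e. when `d^V_W` is a square matrix). -/
def schofieldSI (t h : A → V) {α w : V → ℕ} (W : RepSpace K t h w)
    (Vm : RepSpace K t h α) : K :=
  if hc : Fintype.card ((i : V) × (Fin (w i) × Fin (α i))) =
      Fintype.card ((a : A) × (Fin (w (h a)) × Fin (α (t a)))) then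
    ((schofieldMatrix K t h Vm W).submatrix (Fintype.equivOfCardEq hc) id).det
  else 0

/-- The representation of `Q` attached to a point of `rep(Q,β)`. -/
def toRep (t h : A → V) {β : V → ℕ} (W : RepSpace K t h β) : QuivRep K V A t h where
  sp i := Fin (β i) → K
  map a := Matrix.mulVecLin (W a)

section Helpers

variable {Q₀ Q₁ : Type}

/-- `HasSub`: the representation given by the matrices `W` over the commutative ring `R` has a
split subrepresentation of rank vector `γ`, in terms of matrices. -/
def HasSub {R : Type} [CommRing R] (t h : Q₁ → Q₀) (β γ : Q₀ → ℕ)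
    (W : ∀ a, Matrix (Fin (β (h a))) (Fin (β (t a))) R) : Prop :=
  ∃ (M : ∀ i, Matrix (Fin (β i)) (Fin (γ i)) R) (N : ∀ i, Matrix (Fin (γ i)) (Fin (β i)) R)
    (C : ∀ a, Matrix (Fin (γ (h a))) (Fin (γ (t a))) R),
    (∀ i, N i * M i = 1) ∧ ∀ a, W a * M (t a) = M (h a) * C a

lemma HasSub.map {R S : Type} [CommRing R] [CommRing S] (f : R →+* S) {t h : Q₁ → Q₀}
    {β γ : Q₀ → ℕ} {W : ∀ a, Matrix (Fin (β (h a))) (Fin (β (t a))) R}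
    (H : HasSub t h β γ W) : HasSub t h β γ (fun a => (W a).map f) := by
  obtain ⟨M, N, C, h1, h2⟩ := H
  refine ⟨fun i => (M i).map f, fun i => (N i).map f, fun a => (C a).map f, ?_, ?_⟩
  · intro i
    rw [← Matrix.map_mul, h1, Matrix.map_one _ (map_zero f) (map_one f)]
  · intro a
    rw [← Matrix.map_mul, h2, Matrix.map_mul]

/-- A matrix with a left inverse has a nonzero maximal minor. -/
lemma exists_minor_ne_zero {F : Type} [Field F] {n k : ℕ} (M : Matrix (Fin n) (Fin k) F)
    (N : Matrix (Fin k) (Fin n) F) (hNM : N * M = 1) :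
    ∃ f : Fin k → Fin n, (M.submatrix f id).det ≠ 0 := by
  by_contra! hcon
  have h1 : (N * M).det = 0 := by
    have : (N * M).det = Matrix.detRowAlternating (fun i => ∑ j, N i j • M j) := by
      change Matrix.det _ = Matrix.det _
      congr 1
      ext i j
      simp [Matrix.mul_apply, Finset.sum_apply]
    rw [this]
    have h2 := (Matrix.detRowAlternating (n := Fin k) (R := F)).toMultilinearMap.map_sum
      (fun i (j : Fin n) => N i j • M j)
    change Matrix.detRowAlternating.toMultilinearMap _ = _
    rw [h2]
    refine Finset.sum_eq_zero fun f _ => ?_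
    rw [MultilinearMap.map_smul_univ]
    have := hcon f
    change _ • Matrix.det (fun i => M (f i)) = 0
    have h3 : Matrix.det (fun i => M (f i)) = 0 := this
    rw [h3, smul_zero]
  rw [hNM, Matrix.det_one] at h1
  exact one_ne_zero h1

/-- Normalizing a matrix with a left inverse with respect to a valuation ring. -/
lemma exists_normalize {F : Type} [Field F] (O : ValuationSubring F) {n k : ℕ}
    (M : Matrix (Fin n) (Fin k) F) (N : Matrix (Fin k) (Fin n) F) (hNM : N * M = 1) :
    ∃ (M' : Matrix (Fin n) (Fin k) O) (N' : Matrix (Fin k) (Fin n) O)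
      (g g' : Matrix (Fin k) (Fin k) F), N' * M' = 1 ∧ g * g' = 1 ∧
        M'.map O.subtype = M * g := by
  classical
  obtain ⟨f₀, hf₀⟩ := exists_minor_ne_zero M N hNM
  obtain ⟨f, -, hf⟩ := Finset.exists_max_image (Finset.univ : Finset (Fin k → Fin n))
    (fun f => O.valuation (M.submatrix f id).det) ⟨f₀, Finset.mem_univ _⟩
  have hne : (M.submatrix f id).det ≠ 0 := by
    intro h0
    have := hf f₀ (Finset.mem_univ _)
    rw [h0, map_zero] at this
    exact hf₀ (by simpa using this)
  set D := M.submatrix f id with hD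
  have hu : IsUnit D.det := isUnit_iff_ne_zero.mpr hne
  set P := M * D⁻¹ with hP
  have hPsub : ∀ f' : Fin k → Fin n, P.submatrix f' id = M.submatrix f' id * D⁻¹ := by
    intro f'
    ext i j
    simp [hP, Matrix.mul_apply]
  have hPf : P.submatrix f id = 1 := by
    rw [hPsub, ← hD, Matrix.mul_nonsing_inv _ hu]
  have hmem : ∀ r s, P r s ∈ O := by
    intro r s
    have e1 : (P.submatrix (Function.update f s r) id) =
        (1 : Matrix (Fin k) (Fin k) F).updateRow s (P r) := by
      ext i j
      by_cases his : i = s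
      · subst his; simp
      · have := congrFun (congrFun hPf i) j
        simp [Matrix.updateRow_ne his, Function.update_of_ne his] at this ⊢
        exact this
    have e2 : (P.submatrix (Function.update f s r) id).det = P r s := by
      rw [e1]
      have : P r = ∑ l, P r l • (1 : Matrix (Fin k) (Fin k) F) l := by
        ext j
        simp [Finset.sum_apply, Matrix.one_apply]
      rw [this, Matrix.det_updateRow_sum]
      simp [Finset.sum_apply, Matrix.one_apply]
    rw [← O.valuation_le_one_iff, ← e2, hPsub, Matrix.det_mul, Matrix.det_nonsing_inv,
      Ring.inverse_eq_inv', map_mul, map_inv₀]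
    have h0 : O.valuation D.det ≠ 0 := by simpa using hne
    rw [← div_eq_mul_inv]
    exact div_le_one_of_le₀ (hf _ (Finset.mem_univ _)) zero_le
  refine ⟨Matrix.of fun r s => ⟨P r s, hmem r s⟩,
    Matrix.of fun s r => if r = f s then 1 else 0, D⁻¹, D, ?_,
    Matrix.nonsing_inv_mul _ hu, ?_⟩
  · ext i j
    have := congrFun (congrFun hPf i) j
    simp only [Matrix.submatrix_apply, id] at this
    simp only [Matrix.mul_apply, Matrix.of_apply, ite_mul, one_mul, zero_mul,
      Finset.sum_ite_eq', Finset.sum_ite_eq, Finset.mem_univ, if_true, this, Matrix.one_apply]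
    split_ifs <;> simp
  · ext i j
    rfl

/-- Valuative criterion: subrepresentations extend over valuation rings. -/
lemma HasSub.extend {F : Type} [Field F] (O : ValuationSubring F) {t h : Q₁ → Q₀}
    {β γ : Q₀ → ℕ} (W : ∀ a, Matrix (Fin (β (h a))) (Fin (β (t a))) O)
    (H : HasSub t h β γ (fun a => (W a).map O.subtype)) : HasSub t h β γ W := by
  obtain ⟨M, N, C, h1, h2⟩ := H
  choose M' N' g g' h3 h4 h5 using fun i => exists_normalize O (M i) (N i) (h1 i)
  refine ⟨M', N', fun a => N' (h a) * (W a * M' (t a)), h3, fun a => ?_⟩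
  have inj : Function.Injective (fun X : Matrix (Fin (β (h a))) (Fin (γ (t a))) O =>
      X.map O.subtype) := Matrix.map_injective O.subtype_injective
  apply inj
  have e : (W a * M' (t a)).map O.subtype =
      (M' (h a)).map O.subtype * (g' (h a) * C a * g (t a)) := by
    rw [Matrix.map_mul, h5, h5, ← Matrix.mul_assoc, h2 a]
    have := h4 (h a)
    calc M (h a) * C a * g (t a) = M (h a) * (g (h a) * g' (h a)) * C a * g (t a) := by
          rw [this, Matrix.mul_one]
      _ = _ := by simp only [Matrix.mul_assoc]
  have e3 : (N' (h a)).map O.subtype * (M' (h a)).map O.subtype = 1 := by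
    rw [← Matrix.map_mul, h3, Matrix.map_one _ (map_zero _) (map_one _)]
  change (W a * M' (t a)).map O.subtype = (M' (h a) * (N' (h a) * (W a * M' (t a)))).map O.subtype
  rw [Matrix.map_mul (L := M' (h a)), Matrix.map_mul (L := N' (h a)), e,
    ← Matrix.mul_assoc (Matrix.map (N' (h a)) _), e3, Matrix.one_mul]

/-- Nullstellensatz: a subrepresentation over an extension field yields one over `K`. -/
lemma HasSub.descend {K k : Type} [Field K] [IsAlgClosed K] [Field k] [Algebra K k]
    [Finite Q₀] [Finite Q₁] {t h : Q₁ → Q₀}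
    {β γ : Q₀ → ℕ} (W : ∀ a, Matrix (Fin (β (h a))) (Fin (β (t a))) K)
    (H : HasSub t h β γ (fun a => (W a).map (algebraMap K k))) : HasSub t h β γ W := by
  obtain ⟨M, N, C, h1, h2⟩ := H
  let s : Set k := (Set.range fun x : (i : Q₀) × (Fin (β i) × Fin (γ i)) => M x.1 x.2.1 x.2.2) ∪
    (Set.range fun x : (i : Q₀) × (Fin (γ i) × Fin (β i)) => N x.1 x.2.1 x.2.2) ∪
    (Set.range fun x : (a : Q₁) × (Fin (γ (h a)) × Fin (γ (t a))) => C x.1 x.2.1 x.2.2)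
  have hs : s.Finite := ((Set.finite_range _).union (Set.finite_range _)).union
    (Set.finite_range _)
  let B := Algebra.adjoin K s
  have hfg : B.FG := ⟨hs.toFinset, by simp [B]⟩
  have hft : Algebra.FiniteType K B := Subalgebra.fg_iff_finiteType B |>.mp hfg
  have hM : ∀ i x y, M i x y ∈ B := fun i x y =>
    Algebra.subset_adjoin (Or.inl (Or.inl ⟨⟨i, x, y⟩, rfl⟩))
  have hN : ∀ i x y, N i x y ∈ B := fun i x y =>
    Algebra.subset_adjoin (Or.inl (Or.inr ⟨⟨i, x, y⟩, rfl⟩))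
  have hC : ∀ i x y, C i x y ∈ B := fun i x y =>
    Algebra.subset_adjoin (Or.inr ⟨⟨i, x, y⟩, rfl⟩)
  have HB : HasSub t h β γ (fun a => (W a).map (algebraMap K B)) := by
    refine ⟨fun i => Matrix.of fun x y => ⟨M i x y, hM i x y⟩,
      fun i => Matrix.of fun x y => ⟨N i x y, hN i x y⟩,
      fun i => Matrix.of fun x y => ⟨C i x y, hC i x y⟩, fun i => ?_, fun a => ?_⟩
    · ext x y
      have := congrFun (congrFun (h1 i) x) y
      simp only [Matrix.mul_apply, Matrix.one_apply, Matrix.of_apply] at this ⊢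
      push_cast
      rw [this]
      split_ifs <;> simp
    · ext x y
      have := congrFun (congrFun (h2 a) x) y
      simp only [Matrix.mul_apply, Matrix.map_apply, Matrix.of_apply] at this ⊢
      push_cast
      exact this
  obtain ⟨m, hm⟩ := Ideal.exists_maximal B
  let := Ideal.Quotient.field m
  have hfin := finite_of_finite_type_of_isJacobsonRing K (B ⧸ m)
  have hbij := IsAlgClosed.algebraMap_bijective_of_isIntegral (k := K) (K := B ⧸ m)
  let e := RingEquiv.ofBijective _ hbij
  have := HB.map ((e.symm : (B ⧸ m) →+* K).comp (Ideal.Quotient.mk m))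
  convert this using 2 with a
  ext x y
  simp only [Matrix.map_apply, RingHom.comp_apply]
  symm
  change e.symm (algebraMap K (B ⧸ m) _) = _
  exact e.symm_apply_apply _

/-- Specialization of subrepresentations along a point `ev` of a domain `P`. -/
lemma HasSub.specialize {K P F : Type} [Field K] [IsAlgClosed K] [CommRing P] [IsDomain P]
    [Field F] [Finite Q₀] [Finite Q₁] {t h : Q₁ → Q₀} {β γ : Q₀ → ℕ}
    (ev : P →+* K) (c : K →+* P) (hc : ∀ x, ev (c x) = x)
    (gen : ∀ a, Matrix (Fin (β (h a))) (Fin (β (t a))) P)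
    (W₀ : ∀ a, Matrix (Fin (β (h a))) (Fin (β (t a))) K)
    (hgen : ∀ a x y, ev (gen a x y) = W₀ a x y)
    (ψ : P →+* F) (hψ : Function.Injective ψ)
    (hF : HasSub t h β γ (fun a => (gen a).map ψ)) : HasSub t h β γ W₀ := by
  let m : Ideal P := RingHom.ker ev
  have hm : m.IsPrime := RingHom.ker_isPrime ev
  let L := Localization.AtPrime m
  let ψL : L →+* F := IsLocalization.lift (M := m.primeCompl) (S := L) (g := ψ) (by
    rintro ⟨y, hy⟩
    refine isUnit_iff_ne_zero.mpr fun h0 => hy ?_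
    have : y = 0 := hψ (by simpa using h0)
    rw [this]
    exact m.zero_mem)
  have hψL : ∀ p, ψL (algebraMap P L p) = ψ p := fun p => IsLocalization.lift_eq _ p
  obtain ⟨O, hO, hloc⟩ := IsLocalRing.exists_factor_valuationRing ψL
  let θ : L →+* O := ψL.codRestrict O.toSubring hO
  have hlocθ : IsLocalHom θ := hloc
  let χ : P →+* O := θ.comp (algebraMap P L)
  have hχ : ∀ p, O.subtype (χ p) = ψ p := hψL
  have hOsub : HasSub t h β γ (fun a => (gen a).map χ) := by
    apply HasSub.extend O
    convert hF using 2 with a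
    ext x y
    exact hχ _
  have hk := hOsub.map (IsLocalRing.residue O)
  let : Algebra K (IsLocalRing.ResidueField O) :=
    (((IsLocalRing.residue O).comp χ).comp c).toAlgebra
  apply HasSub.descend (k := IsLocalRing.ResidueField O)
  refine cast (congrArg (HasSub t h β γ) ?_) hk
  funext a
  ext x y
  change (IsLocalRing.residue O) (χ (gen a x y)) = (IsLocalRing.residue O) (χ (c (W₀ a x y)))
  symm
  rw [← sub_eq_zero, ← map_sub, ← map_sub, IsLocalRing.residue_eq_zero_iff,
    IsLocalRing.mem_maximalIdeal, mem_nonunits_iff]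
  intro hu
  have hu' : IsUnit (algebraMap P L (c (W₀ a x y) - gen a x y)) :=
    isUnit_of_map_unit θ _ hu
  rw [IsLocalization.AtPrime.isUnit_to_map_iff L m] at hu'
  exact hu' (by simp [m, RingHom.mem_ker, hc, hgen])

/-- The coordinates on the representation space. -/
abbrev Coord (t h : Q₁ → Q₀) (β : Q₀ → ℕ) : Type :=
  (a : Q₁) × (Fin (β (h a)) × Fin (β (t a)))

/-- The locus of representations having a subrepresentation of dimension vector `γ`, if it is not
everything, is contained in a hypersurface. -/
lemma exists_poly {K : Type} [Field K] [IsAlgClosed K]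
    [Finite Q₀] [Finite Q₁] (t h : Q₁ → Q₀)
    (β γ : Q₀ → ℕ) (W₀ : ∀ a, Matrix (Fin (β (h a))) (Fin (β (t a))) K)
    (H : ¬ HasSub t h β γ W₀) :
    ∃ p : MvPolynomial (Coord t h β) K, p ≠ 0 ∧
      ∀ W : ∀ a, Matrix (Fin (β (h a))) (Fin (β (t a))) K, HasSub t h β γ W →
        MvPolynomial.eval (fun x => W x.1 x.2.1 x.2.2) p = 0 := by
  by_contra! hcon
  apply H
  let Z := {W : ∀ a, Matrix (Fin (β (h a))) (Fin (β (t a))) K // HasSub t h β γ W}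
  let P := MvPolynomial (Coord t h β) K
  let φ : P →+* (Z → K) := RingHom.pi fun W =>
    MvPolynomial.eval (fun x => W.1 x.1 x.2.1 x.2.2)
  have hφ : Function.Injective φ := by
    rw [injective_iff_map_eq_zero]
    intro p hp
    by_contra hne
    obtain ⟨W, hW, h0⟩ := hcon p hne
    exact h0 (congrFun hp ⟨W, hW⟩)
  let gen : ∀ a, Matrix (Fin (β (h a))) (Fin (β (t a))) P :=
    fun a => Matrix.of fun x y => MvPolynomial.X ⟨a, x, y⟩
  have hZ : HasSub t h β γ (fun a => (gen a).map φ) := by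
    choose M N C h1 h2 using fun W : Z => W.2
    refine ⟨fun i => Matrix.of fun x y W => M W i x y, fun i => Matrix.of fun x y W => N W i x y,
      fun i => Matrix.of fun x y W => C W i x y,
      fun i => ?_, fun a => ?_⟩
    · ext x y W
      have := congrFun (congrFun (h1 W i) x) y
      simp only [Matrix.mul_apply, Matrix.one_apply, Matrix.of_apply, Finset.sum_apply, Pi.mul_apply] at this ⊢
      rw [this]
      split_ifs <;> simp
    · ext x y W
      have := congrFun (congrFun (h2 W a) x) y
      simp only [Matrix.mul_apply, Matrix.map_apply, Matrix.of_apply, Finset.sum_apply, Pi.mul_apply] at this ⊢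
      rw [← this]
      refine Finset.sum_congr rfl fun j _ => ?_
      congr 1
      exact MvPolynomial.eval_X _
  obtain ⟨q, hq, hq0⟩ := Ideal.exists_comap_eq_of_mem_minimalPrimes_of_injective hφ ⊥
    (by simp [IsDomain.minimalPrimes_eq_singleton_bot])
  let F := FractionRing ((Z → K) ⧸ q)
  let ψ : P →+* F := ((algebraMap ((Z → K) ⧸ q) F).comp (Ideal.Quotient.mk q)).comp φ
  have hψ : Function.Injective ψ := by
    rw [injective_iff_map_eq_zero]
    intro p hp
    have h1 : Ideal.Quotient.mk q (φ p) = 0 :=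
      (IsFractionRing.injective ((Z → K) ⧸ q) F) (by simpa [ψ] using hp)
    rw [Ideal.Quotient.eq_zero_iff_mem] at h1
    have : p ∈ q.comap φ := h1
    rwa [hq0] at this
  have hF : HasSub t h β γ (fun a => (gen a).map ψ) :=
    hZ.map ((algebraMap ((Z → K) ⧸ q) F).comp (Ideal.Quotient.mk q))
  exact HasSub.specialize (MvPolynomial.eval (fun x => W₀ x.1 x.2.1 x.2.2)) MvPolynomial.C
    (by simp) gen W₀ (fun a x y => by simp [gen]) ψ hψ hF

/-- Existence of a representation avoiding finitely many non-generic dimension vectors. -/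
lemma exists_generic {K : Type} [Field K] [IsAlgClosed K]
    [Finite Q₀] [Finite Q₁] (t h : Q₁ → Q₀)
    (β : Q₀ → ℕ) (S : Finset (Q₀ → ℕ))
    (H : ∀ γ ∈ S, ∃ W : ∀ a, Matrix (Fin (β (h a))) (Fin (β (t a))) K, ¬ HasSub t h β γ W) :
    ∃ W : ∀ a, Matrix (Fin (β (h a))) (Fin (β (t a))) K, ∀ γ ∈ S, ¬ HasSub t h β γ W := by
  have H' : ∀ γ : S, ∃ p : MvPolynomial (Coord t h β) K, p ≠ 0 ∧
      ∀ W : ∀ a, Matrix (Fin (β (h a))) (Fin (β (t a))) K, HasSub t h β γ W →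
        MvPolynomial.eval (fun x => W x.1 x.2.1 x.2.2) p = 0 := by
    rintro ⟨γ, hγ⟩
    obtain ⟨W, hW⟩ := H γ hγ
    exact exists_poly t h β γ W hW
  choose p hp0 hp using H'
  have hprod : ∏ γ : S, p γ ≠ 0 := Finset.prod_ne_zero_iff.mpr fun γ _ => hp0 γ
  have : ∃ x : Coord t h β → K, MvPolynomial.eval x (∏ γ : S, p γ) ≠ 0 := by
    by_contra! hcon
    exact hprod (MvPolynomial.funext (by simpa using hcon))
  obtain ⟨x, hx⟩ := this
  refine ⟨fun a r s => x ⟨a, r, s⟩, fun γ hγ hs => hx ?_⟩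
  rw [map_prod]
  exact Finset.prod_eq_zero (Finset.mem_univ ⟨γ, hγ⟩) (hp ⟨γ, hγ⟩ _ hs)

lemma sub_of_hasSub {K : Type} [Field K] {t h : Q₁ → Q₀} {β γ : Q₀ → ℕ}
    (W : RepSpace K t h β) (H : HasSub t h β γ W) :
    ∃ U : QuivRep.Sub (toRep K t h W), U.dimVec = γ := by
  obtain ⟨M, N, C, h1, h2⟩ := H
  refine ⟨⟨fun i => LinearMap.range (Matrix.mulVecLin (M i)), ?_⟩, ?_⟩
  · rintro a _ ⟨x, rfl⟩
    refine ⟨(C a).mulVec x, ?_⟩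
    change (M (h a)).mulVec ((C a).mulVec x) = (W a).mulVec ((M (t a)).mulVec x)
    rw [Matrix.mulVec_mulVec, Matrix.mulVec_mulVec, h2 a]
  · funext i
    change Module.finrank K (LinearMap.range (Matrix.mulVecLin (M i))) = γ i
    rw [LinearMap.finrank_range_of_inj, Module.finrank_fin_fun]
    intro x y hxy
    have := congrArg (N i).mulVec hxy
    simpa [Matrix.mulVec_mulVec, h1 i] using this

lemma hasSub_of_sub {K : Type} [Field K] {t h : Q₁ → Q₀} {β γ : Q₀ → ℕ}
    (W : RepSpace K t h β) (U : QuivRep.Sub (toRep K t h W)) (hU : U.dimVec = γ) :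
    HasSub t h β γ W := by
  have key : ∀ i, ∃ (M : Matrix (Fin (β i)) (Fin (γ i)) K) (N : Matrix (Fin (γ i)) (Fin (β i)) K),
      N * M = 1 ∧ (∀ x, M.mulVec x ∈ U.sub i) ∧ ∀ y ∈ U.sub i, M.mulVec (N.mulVec y) = y := by
    intro i
    let E : Submodule K (Fin (β i) → K) := U.sub i
    have hE : Module.finrank K E = γ i := congrFun hU i
    let e : (Fin (γ i) → K) ≃ₗ[K] E := LinearEquiv.ofFinrankEq _ _ (by simp [hE])
    let m : (Fin (γ i) → K) →ₗ[K] (Fin (β i) → K) := E.subtype ∘ₗ e.toLinearMap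
    have hm : LinearMap.ker m = ⊥ := by
      rw [LinearMap.ker_eq_bot]
      exact E.injective_subtype.comp e.injective
    obtain ⟨n, hn⟩ := m.exists_leftInverse_of_injective hm
    refine ⟨LinearMap.toMatrix' m, LinearMap.toMatrix' n, ?_, ?_, ?_⟩
    · rw [← LinearMap.toMatrix'_comp, hn, LinearMap.toMatrix'_id]
    · intro x
      rw [LinearMap.toMatrix'_mulVec]
      exact (e x).2
    · intro (y : Fin (β i) → K) hy
      rw [LinearMap.toMatrix'_mulVec, LinearMap.toMatrix'_mulVec]
      have : y = m (e.symm ⟨y, hy⟩) := by simp [m]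
      rw [this]
      have := LinearMap.congr_fun hn (e.symm ⟨y, hy⟩)
      simp only [LinearMap.comp_apply, LinearMap.id_apply] at this
      rw [this]
  choose M N h1 h2 h3 using key
  refine ⟨M, N, fun a => N (h a) * (W a * M (t a)), h1, fun a => ?_⟩
  apply Matrix.toLin'.injective
  apply LinearMap.ext
  intro x
  funext r
  simp only [Matrix.toLin'_apply, LinearMap.comp_apply, ← Matrix.mulVec_mulVec]
  exact congrFun (h3 (h a) _ (U.le a _ (h2 _ _))).symm _

/-- Every representation is isomorphic to one given by matrices. -/
lemma exists_matrix_model {K : Type} [Field K] {t h : Q₁ → Q₀} {β : Q₀ → ℕ}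
    (X : QuivRep K Q₀ Q₁ t h) (hX : X.dimVec = β) :
    ∃ W : RepSpace K t h β, ∀ γ : Q₀ → ℕ, HasSub t h β γ W → ∃ U : QuivRep.Sub X, U.dimVec = γ := by
  have e : ∀ i, (Fin (β i) → K) ≃ₗ[K] X.sp i := fun i =>
    LinearEquiv.ofFinrankEq _ _ (by rw [← hX, Module.finrank_fin_fun]; rfl)
  refine ⟨fun a => LinearMap.toMatrix'
    ((e (h a)).symm.toLinearMap ∘ₗ X.map a ∘ₗ (e (t a)).toLinearMap), fun γ H => ?_⟩
  obtain ⟨U, hU⟩ := sub_of_hasSub _ H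
  refine ⟨⟨fun i => Submodule.map (e i).toLinearMap (U.sub i), ?_⟩, ?_⟩
  · rintro a _ ⟨x, hx, rfl⟩
    have := U.le a x hx
    refine ⟨_, this, ?_⟩
    have e1 : (toRep K t h (fun a => LinearMap.toMatrix'
        ((e (h a)).symm.toLinearMap ∘ₗ X.map a ∘ₗ (e (t a)).toLinearMap))).map a x =
        (e (h a)).symm (X.map a (e (t a) x)) :=
      LinearMap.toMatrix'_mulVec
        ((e (h a)).symm.toLinearMap ∘ₗ X.map a ∘ₗ (e (t a)).toLinearMap) x
    rw [e1]
    exact (e (h a)).apply_symm_apply _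
  · rw [← hU]
    funext i
    exact LinearEquiv.finrank_map_eq (e i) (U.sub i)

end Helpers

/-- There exists a `σ`-stable representation of dimension vector `β`
iff `β ≠ 0`, `σ(β) = 0` and `σ(β') < 0` for every `β' ↪ β` with `β' ≠ 0, β`. -/
theorem stmt1 [IsAlgClosed K] [CharZero K] (t h : A → V) (hQ : Acyclic t h)
    (β : V → ℕ) (σ : V → ℤ) :
    (∃ W : QuivRep K V A t h, W.dimVec = β ∧ IsStable K σ W) ↔
      (β ≠ (fun _ => 0) ∧ (∑ i, σ i * (β i : ℤ)) = 0 ∧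
        ∀ β' : V → ℕ, Embeds K t h β' β → β' ≠ (fun _ => 0) → β' ≠ β →
          (∑ i, σ i * (β' i : ℤ)) < 0) := by
  constructor
  · rintro ⟨W, rfl, h0, hne, hst⟩
    refine ⟨hne, h0, fun β' hemb hn0 hnβ => ?_⟩
    obtain ⟨U, rfl⟩ := hemb W rfl
    exact hst U hn0 hnβ
  · rintro ⟨hne, h0, hst⟩
    classical
    let S : Finset (V → ℕ) := (Finset.Iic β).filter fun γ => ¬ Embeds K t h γ β
    obtain ⟨W, hW⟩ := exists_generic (K := K) t h β S (by
      intro γ hγ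
      have hγ' : ¬ Embeds K t h γ β := (Finset.mem_filter.mp hγ).2
      unfold Embeds at hγ'
      push Not at hγ'
      obtain ⟨X, hX, hno⟩ := hγ'
      obtain ⟨W, hW⟩ := exists_matrix_model X hX
      refine ⟨W, fun hs => ?_⟩
      obtain ⟨U, hU⟩ := hW γ hs
      exact hno U hU)
    have hdim : (toRep K t h W).dimVec = β := by
      funext i
      exact Module.finrank_fin_fun K
    refine ⟨toRep K t h W, hdim, ?_, ?_, ?_⟩
    · rw [hdim]; exact h0
    · rw [hdim]; exact hne
    · intro U hU0 hUβ
      rw [hdim] at hUβ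
      refine hst _ ?_ hU0 hUβ
      by_contra hemb
      refine hW U.dimVec (Finset.mem_filter.mpr ⟨Finset.mem_Iic.mpr fun i => ?_, hemb⟩)
        (hasSub_of_sub W U rfl)
      exact (Submodule.finrank_le (U.sub i)).trans_eq (congrFun hdim i)

end
end

section
/- Let α be a non-zero pre-homogeneous dimension vector of Q and let σ be either the weight ⟨α,·⟩ or the weight −⟨·,α⟩. Then there are, up to isomorphism, only finitely many σ-stable representations E_1,…,E_l, their number l satisfies l ≤ |Q_0| − 1, and each E_i is an exceptional representation. -/
set_option autoImplicit false

noncomputable section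

open scoped BigOperators

/-! Basic setup for representations of a quiver with vertex set `V`, arrow set `A`,
tail map `t` and head map `h`, over a field `K`. -/

variable (K : Type) [Field K]
variable {V A : Type} [Fintype V] [DecidableEq V] [Fintype A]

set_option linter.unusedSectionVars false

section Helpers

variable {K} {t h : A → V}

/-- Elementwise form of being a morphism of representations. -/
def IsHom (X Y : QuivRep K V A t h) (f : ∀ i, X.sp i →ₗ[K] Y.sp i) : Prop :=
  ∀ a x, f (h a) (X.map a x) = Y.map a (f (t a) x)

/-- `Hom(X,Y) = 0`. -/
def HomZ (X Y : QuivRep K V A t h) : Prop :=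
  ∀ f : ∀ i, X.sp i →ₗ[K] Y.sp i, IsHom X Y f → ∀ i x, f i x = 0

/-- `Ext(X,Y) = 0`. -/
def ExtZ (X Y : QuivRep K V A t h) : Prop :=
  ∀ ψ : ∀ a, X.sp (t a) →ₗ[K] Y.sp (h a), ∃ φ : ∀ i, X.sp i →ₗ[K] Y.sp i,
    ∀ a x, φ (h a) (X.map a x) - Y.map a (φ (t a) x) = ψ a x

theorem isHom_iff (X Y : QuivRep K V A t h) (f : ∀ i, X.sp i →ₗ[K] Y.sp i) :
    f ∈ QuivRep.homS X Y ↔ IsHom X Y f := by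
  constructor
  · intro hf a x
    exact LinearMap.congr_fun (hf a) x
  · intro hf a
    ext x
    exact hf a x

theorem homS_eq_ker (X Y : QuivRep K V A t h) :
    QuivRep.homS X Y = LinearMap.ker (QuivRep.dmap X Y) := by
  ext f
  rw [LinearMap.mem_ker]
  constructor
  · intro hf
    funext a
    exact sub_eq_zero.2 (hf a)
  · intro hf a
    exact sub_eq_zero.1 (congrFun hf a)

theorem extZ_iff (X Y : QuivRep K V A t h) : QuivRep.extDim X Y = 0 ↔ ExtZ X Y := by
  unfold QuivRep.extDim
  rw [Module.finrank_zero_iff, Submodule.Quotient.subsingleton_iff,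
    LinearMap.range_eq_top]
  constructor
  · intro H ψ
    obtain ⟨φ, hφ⟩ := H ψ
    exact ⟨φ, fun a x => LinearMap.congr_fun (congrFun hφ a) x⟩
  · intro H ψ
    obtain ⟨φ, hφ⟩ := H ψ
    refine ⟨φ, ?_⟩
    funext a
    ext x
    exact hφ a x

theorem homZ_iff (X Y : QuivRep K V A t h) : QuivRep.homDim X Y = 0 ↔ HomZ X Y := by
  unfold QuivRep.homDim
  rw [Submodule.finrank_eq_zero, Submodule.eq_bot_iff]
  constructor
  · intro H f hf i x
    rw [H f ((isHom_iff X Y f).2 hf)]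
    rfl
  · intro H f hf
    funext i
    ext x
    exact H f ((isHom_iff X Y f).1 hf) i x

theorem euler_hom_ext (X Y : QuivRep K V A t h) :
    (QuivRep.homDim X Y : ℤ) - QuivRep.extDim X Y
      = eulerForm t h (natZ X.dimVec) (natZ Y.dimVec) := by
  have h1 := LinearMap.finrank_range_add_finrank_ker (QuivRep.dmap X Y)
  have h2 := Submodule.finrank_quotient_add_finrank (LinearMap.range (QuivRep.dmap X Y))
  rw [← homS_eq_ker] at h1
  rw [Module.finrank_pi_fintype] at h1 h2
  simp only [Module.finrank_linearMap] at h1 h2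
  unfold QuivRep.homDim QuivRep.extDim eulerForm natZ QuivRep.dimVec
  have e1 : (∑ i, (Module.finrank K (X.sp i) : ℤ) * (Module.finrank K (Y.sp i) : ℤ))
    = ((∑ i, Module.finrank K (X.sp i) * Module.finrank K (Y.sp i) : ℕ) : ℤ) := by push_cast; rfl
  have e2 : (∑ a, (Module.finrank K (X.sp (t a)) : ℤ) * (Module.finrank K (Y.sp (h a)) : ℤ))
    = ((∑ a, Module.finrank K (X.sp (t a)) * Module.finrank K (Y.sp (h a)) : ℕ) : ℤ) := by
    push_cast; rfl
  rw [e1, e2]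
  omega

/-- Lift through a surjection. -/
theorem lin_lift {X Y Z : Type} [AddCommGroup X] [Module K X] [AddCommGroup Y] [Module K Y]
    [AddCommGroup Z] [Module K Z] (g : Y →ₗ[K] Z) (hg : Function.Surjective g) (f : X →ₗ[K] Z) :
    ∃ f' : X →ₗ[K] Y, ∀ x, g (f' x) = f x := by
  obtain ⟨s, hs⟩ := g.exists_rightInverse_of_surjective (LinearMap.range_eq_top.2 hg)
  exact ⟨s.comp f, fun x => LinearMap.congr_fun hs (f x)⟩

/-- Extend along an injection. -/
theorem lin_ext {X Y Z : Type} [AddCommGroup X] [Module K X] [AddCommGroup Y] [Module K Y]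
    [AddCommGroup Z] [Module K Z] (g : X →ₗ[K] Y) (hg : Function.Injective g) (f : X →ₗ[K] Z) :
    ∃ f' : Y →ₗ[K] Z, ∀ x, f' (g x) = f x := by
  obtain ⟨s, hs⟩ := g.exists_leftInverse_of_injective (LinearMap.ker_eq_bot.2 hg)
  refine ⟨f.comp s, fun x => ?_⟩
  have := LinearMap.congr_fun hs x
  simp only [LinearMap.comp_apply, LinearMap.id_apply] at this ⊢
  rw [this]

/-- Factor through a surjection. -/
theorem lin_factor {X Y Z : Type} [AddCommGroup X] [Module K X] [AddCommGroup Y] [Module K Y]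
    [AddCommGroup Z] [Module K Z] (g : X →ₗ[K] Y) (hg : Function.Surjective g) (f : X →ₗ[K] Z)
    (hf : ∀ x, g x = 0 → f x = 0) :
    ∃ f' : Y →ₗ[K] Z, ∀ x, f' (g x) = f x := by
  obtain ⟨s, hs⟩ := g.exists_rightInverse_of_surjective (LinearMap.range_eq_top.2 hg)
  refine ⟨f.comp s, fun x => ?_⟩
  have := LinearMap.congr_fun hs (g x)
  simp only [LinearMap.comp_apply, LinearMap.id_apply] at this ⊢
  rw [← sub_eq_zero, ← map_sub]
  apply hf
  rw [map_sub, this, sub_self]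

/-- Corestrict to the range of an injection. -/
theorem lin_corestrict {X Y Z : Type} [AddCommGroup X] [Module K X] [AddCommGroup Y] [Module K Y]
    [AddCommGroup Z] [Module K Z] (g : Y →ₗ[K] Z) (hg : Function.Injective g) (f : X →ₗ[K] Z)
    (hf : ∀ x, f x ∈ LinearMap.range g) :
    ∃ f' : X →ₗ[K] Y, ∀ x, g (f' x) = f x := by
  obtain ⟨s, hs⟩ := g.exists_leftInverse_of_injective (LinearMap.ker_eq_bot.2 hg)
  refine ⟨s.comp f, fun x => ?_⟩
  obtain ⟨y, hy⟩ := hf x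
  have := LinearMap.congr_fun hs y
  simp only [LinearMap.comp_apply, LinearMap.id_apply] at this ⊢
  rw [← hy, this]

theorem ext_of_surj {X Y Z : QuivRep K V A t h} (g : ∀ i, Y.sp i →ₗ[K] Z.sp i)
    (hg : IsHom Y Z g) (hs : ∀ i, Function.Surjective (g i)) (H : ExtZ X Y) : ExtZ X Z := by
  intro ψ
  choose ψ' hψ' using fun a => lin_lift (g (h a)) (hs (h a)) (ψ a)
  obtain ⟨φ, hφ⟩ := H ψ'
  refine ⟨fun i => (g i).comp (φ i), fun a x => ?_⟩
  rw [← hψ', ← hφ, map_sub, hg]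
  rfl

theorem ext_of_inj {X X' Y : QuivRep K V A t h} (f : ∀ i, X'.sp i →ₗ[K] X.sp i)
    (hf : IsHom X' X f) (hi : ∀ i, Function.Injective (f i)) (H : ExtZ X Y) : ExtZ X' Y := by
  intro ψ
  choose ψ' hψ' using fun a => lin_ext (f (t a)) (hi (t a)) (ψ a)
  obtain ⟨φ, hφ⟩ := H ψ'
  refine ⟨fun i => (φ i).comp (f i), fun a x => ?_⟩
  rw [← hψ', ← hφ, ← hf]
  rfl

theorem isHom_comp {X Y Z : QuivRep K V A t h} {f : ∀ i, X.sp i →ₗ[K] Y.sp i}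
    {g : ∀ i, Y.sp i →ₗ[K] Z.sp i} (hf : IsHom X Y f) (hg : IsHom Y Z g) :
    IsHom X Z (fun i => (g i).comp (f i)) := by
  intro a x
  simp only [LinearMap.comp_apply]
  rw [hf, hg]

/-- A subrepresentation is the image of an injective morphism. -/
theorem exists_sub {X : QuivRep K V A t h} (U : QuivRep.Sub X) :
    ∃ (Y : QuivRep K V A t h) (f : ∀ i, Y.sp i →ₗ[K] X.sp i), IsHom Y X f ∧
      (∀ i, Function.Injective (f i)) ∧ (∀ i, LinearMap.range (f i) = U.sub i) ∧
      Y.dimVec = U.dimVec := by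
  refine ⟨{ sp := fun i => U.sub i, map := fun a => (X.map a).restrict (U.le a) },
    fun i => (U.sub i).subtype, ?_, ?_, ?_, ?_⟩
  · intro a x
    rfl
  · intro i
    exact Subtype.val_injective
  · intro i
    exact Submodule.range_subtype _
  · rfl

/-- Quotient representations. -/
theorem exists_quot {X : QuivRep K V A t h} (U : QuivRep.Sub X) :
    ∃ (Y : QuivRep K V A t h) (f : ∀ i, X.sp i →ₗ[K] Y.sp i), IsHom X Y f ∧
      (∀ i, Function.Surjective (f i)) ∧ (∀ i, LinearMap.ker (f i) = U.sub i) ∧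
      (∀ i, Y.dimVec i + U.dimVec i = X.dimVec i) := by
  let mq : ∀ a, (X.sp (t a) ⧸ U.sub (t a)) →ₗ[K] (X.sp (h a) ⧸ U.sub (h a)) :=
    fun a => (U.sub (t a)).mapQ (U.sub (h a)) (X.map a) (U.le a)
  refine ⟨{ sp := fun i => X.sp i ⧸ U.sub i, map := mq },
    fun i => (U.sub i).mkQ, ?_, ?_, ?_, ?_⟩
  · intro a x
    rfl
  · intro i
    exact Submodule.mkQ_surjective _
  · intro i
    exact Submodule.ker_mkQ _
  · intro i
    exact Submodule.finrank_quotient_add_finrank _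

/-- Kernel of a morphism. -/
def kerSub {X Y : QuivRep K V A t h} (f : ∀ i, X.sp i →ₗ[K] Y.sp i) (hf : IsHom X Y f) :
    QuivRep.Sub X where
  sub i := LinearMap.ker (f i)
  le a x hx := by
    rw [LinearMap.mem_ker] at hx ⊢
    rw [hf, hx, map_zero]

/-- Image of a morphism. -/
def imSub {X Y : QuivRep K V A t h} (f : ∀ i, X.sp i →ₗ[K] Y.sp i) (hf : IsHom X Y f) :
    QuivRep.Sub Y where
  sub i := LinearMap.range (f i)
  le a x hx := by
    obtain ⟨y, rfl⟩ := hx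
    exact ⟨X.map a y, hf a y⟩

theorem im_add_ker {X Y : QuivRep K V A t h} (f : ∀ i, X.sp i →ₗ[K] Y.sp i) (hf : IsHom X Y f)
    (i : V) : (imSub f hf).dimVec i + (kerSub f hf).dimVec i = X.dimVec i :=
  LinearMap.finrank_range_add_finrank_ker (f i)

theorem sub_eq_bot_of {X : QuivRep K V A t h} (U : QuivRep.Sub X)
    (hU : U.dimVec = fun _ => 0) (i : V) : U.sub i = ⊥ :=
  Submodule.finrank_eq_zero.1 (congrFun hU i)

theorem sub_eq_top_of {X : QuivRep K V A t h} (U : QuivRep.Sub X)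
    (hU : U.dimVec = X.dimVec) (i : V) : U.sub i = ⊤ :=
  Submodule.eq_top_of_finrank_eq (congrFun hU i)

/-- Image factorization. -/
theorem exists_im {X Y : QuivRep K V A t h} (f : ∀ i, X.sp i →ₗ[K] Y.sp i) (hf : IsHom X Y f) :
    ∃ (I : QuivRep K V A t h) (p : ∀ i, X.sp i →ₗ[K] I.sp i) (j : ∀ i, I.sp i →ₗ[K] Y.sp i),
      IsHom X I p ∧ IsHom I Y j ∧ (∀ i, Function.Surjective (p i)) ∧
      (∀ i, Function.Injective (j i)) ∧ (∀ i x, j i (p i x) = f i x) ∧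
      I.dimVec = (imSub f hf).dimVec := by
  obtain ⟨I, j, hj, hinj, hr, hd⟩ := exists_sub (imSub f hf)
  choose p hp using fun i => lin_corestrict (j i) (hinj i) (f i)
    (fun x => by rw [hr]; exact ⟨x, rfl⟩)
  refine ⟨I, p, j, ?_, hj, ?_, hinj, hp, hd⟩
  · intro a x
    apply hinj
    rw [hp, hj, hp, hf]
  · intro i y
    have : j i y ∈ LinearMap.range (j i) := ⟨y, rfl⟩
    rw [hr] at this
    obtain ⟨x, hx⟩ := this
    exact ⟨x, hinj i (by rw [hp, hx])⟩

/-! ### Stability -/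

/-- value of a weight on a dimension vector -/
def wt (σ : V → ℤ) (d : V → ℕ) : ℤ := ∑ i, σ i * (d i : ℤ)

theorem wt_add (σ : V → ℤ) {d e f : V → ℕ} (hd : ∀ i, d i + e i = f i) :
    wt σ d + wt σ e = wt σ f := by
  unfold wt
  rw [← Finset.sum_add_distrib]
  refine Finset.sum_congr rfl fun i _ => ?_
  rw [← hd i]
  push_cast
  ring

theorem stable_hom {σ : V → ℤ} {X Y : QuivRep K V A t h} (hX : IsStable K σ X)
    (hY : IsStable K σ Y) (f : ∀ i, X.sp i →ₗ[K] Y.sp i) (hf : IsHom X Y f)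
    (hne : ¬ ∀ i x, f i x = 0) : ∀ i, Function.Bijective (f i) := by
  have hadd := wt_add σ (im_add_ker f hf)
  have hX0 : wt σ X.dimVec = 0 := hX.1
  have him : (imSub f hf).dimVec ≠ fun _ => 0 := by
    intro H
    apply hne
    intro i x
    have h1 : f i x ∈ (imSub f hf).sub i := ⟨x, rfl⟩
    rw [sub_eq_bot_of _ H] at h1
    exact (Submodule.mem_bot K).1 h1
  have hker : (kerSub f hf).dimVec ≠ X.dimVec := by
    intro H
    apply hne
    intro i x
    have h1 : x ∈ (kerSub f hf).sub i := by rw [sub_eq_top_of _ H]; trivial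
    exact h1
  have him_le : wt σ (imSub f hf).dimVec ≤ 0 := by
    by_cases H : (imSub f hf).dimVec = Y.dimVec
    · rw [H]; exact hY.1.le
    · exact (hY.2.2 _ him H).le
  have hk0 : (kerSub f hf).dimVec = fun _ => 0 := by
    by_contra H
    have : wt σ (kerSub f hf).dimVec < 0 := hX.2.2 _ H hker
    omega
  have hw : wt σ (kerSub f hf).dimVec = 0 := by
    rw [hk0]; simp [wt]
  have hi : (imSub f hf).dimVec = Y.dimVec := by
    by_contra H
    have : wt σ (imSub f hf).dimVec < 0 := hY.2.2 _ him H
    omega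
  intro i
  exact ⟨LinearMap.ker_eq_bot.1 (sub_eq_bot_of _ hk0 i),
    LinearMap.range_eq_top.1 (sub_eq_top_of _ hi i)⟩

theorem stable_iso {σ : V → ℤ} {X Y : QuivRep K V A t h} (hX : IsStable K σ X)
    (hY : IsStable K σ Y) (H : ¬ HomZ X Y) : RepIso K X Y := by
  unfold HomZ at H
  push Not at H
  obtain ⟨f, hf, i, x, hx⟩ := H
  have hb := stable_hom hX hY f hf (fun H => hx (H i x))
  exact ⟨fun i => LinearEquiv.ofBijective (f i) (hb i), fun a x => hf a x⟩

theorem nonzero_vertex {X : QuivRep K V A t h} (hX : X.dimVec ≠ fun _ => 0) :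
    ∃ i, ∃ x : X.sp i, x ≠ 0 := by
  by_contra H
  push Not at H
  apply hX
  funext i
  have : Subsingleton (X.sp i) := ⟨fun a b => by rw [H i a, H i b]⟩
  exact Module.finrank_zero_of_subsingleton

theorem stable_end [IsAlgClosed K] {σ : V → ℤ} {X : QuivRep K V A t h} (hX : IsStable K σ X)
    (f : ∀ i, X.sp i →ₗ[K] X.sp i) (hf : IsHom X X f) : ∃ c : K, ∀ i x, f i x = c • x := by
  obtain ⟨i, x, hx⟩ := nonzero_vertex hX.2.1
  have : Nontrivial (X.sp i) := ⟨x, 0, hx⟩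
  obtain ⟨c, hc⟩ := Module.End.exists_eigenvalue (f i)
  obtain ⟨v, hv⟩ := hc.exists_hasEigenvector
  refine ⟨c, ?_⟩
  by_contra H
  have hg : IsHom X X (fun i => f i - c • LinearMap.id) := by
    intro a x
    simp [hf a x]
  have hb := stable_hom hX hX _ hg (by
    intro H'
    apply H
    intro i x
    have := H' i x
    simpa [sub_eq_zero] using this) i
  apply hv.2
  apply hb.1
  simp [hv.apply_eq_smul]

theorem homDim_one {X Y : QuivRep K V A t h} (f : ∀ i, X.sp i →ₗ[K] Y.sp i) (hf : IsHom X Y f)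
    (hne : ¬ ∀ i x, f i x = 0)
    (H : ∀ g : ∀ i, X.sp i →ₗ[K] Y.sp i, IsHom X Y g → ∃ c : K, ∀ i x, g i x = c • f i x) :
    QuivRep.homDim X Y = 1 := by
  refine finrank_eq_one (⟨f, (isHom_iff _ _ _).2 hf⟩ : QuivRep.homS X Y) ?_ ?_
  · intro h0
    apply hne
    intro i x
    have := congrArg Subtype.val h0
    have := LinearMap.congr_fun (congrFun this i) x
    exact this
  · rintro ⟨g, hg⟩
    obtain ⟨c, hc⟩ := H g ((isHom_iff _ _ _).1 hg)
    refine ⟨c, ?_⟩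
    ext i x
    exact (hc i x).symm

theorem stable_schur [IsAlgClosed K] {σ : V → ℤ} {X : QuivRep K V A t h}
    (hX : IsStable K σ X) : X.IsSchur := by
  refine homDim_one (fun _ => LinearMap.id) (fun a x => rfl) ?_ (stable_end hX)
  intro H
  obtain ⟨i, x, hx⟩ := nonzero_vertex hX.2.1
  exact hx (H i x)

/-! ### Paths and projective representations -/

/-- Paths starting at `i`. -/
inductive Pth (t h : A → V) (i : V) : V → Type
  | nil : Pth t h i i
  | snoc (a : A) (p : Pth t h i (t a)) : Pth t h i (h a)

/-- The arrow relation. -/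
def arr (t h : A → V) (u v : V) : Prop := ∃ a, t a = u ∧ h a = v

theorem arr_wf (hac : ∀ i, ¬ Relation.TransGen (arr t h) i i) : WellFounded (arr t h) := by
  have : IsTrans V (Relation.TransGen (arr t h)) := ⟨fun _ _ _ => Relation.TransGen.trans⟩
  have : Std.Irrefl (Relation.TransGen (arr t h)) := ⟨hac⟩
  have := Finite.wellFounded_of_trans_of_irrefl (Relation.TransGen (arr t h))
  exact Subrelation.wf (fun h => Relation.TransGen.single h) this

theorem pth_finite (hac : ∀ i, ¬ Relation.TransGen (arr t h) i i) (i j : V) :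
    Finite (Pth t h i j) := by
  induction j using (arr_wf hac).induction with
  | _ j ih =>
    have hf : ∀ a : {a : A // h a = j}, Finite (Pth t h i (t a.1)) :=
      fun a => ih _ ⟨a.1, rfl, a.2⟩
    let F : (PLift (i = j)) ⊕ (Σ a : {a : A // h a = j}, Pth t h i (t a.1)) → Pth t h i j :=
      fun s => match s with
        | Sum.inl e => e.down ▸ Pth.nil
        | Sum.inr ⟨a, p⟩ => a.2 ▸ Pth.snoc a.1 p
    apply Finite.of_surjective F
    intro p
    cases p with
    | nil => exact ⟨Sum.inl ⟨rfl⟩, rfl⟩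
    | snoc a p => exact ⟨Sum.inr ⟨⟨a, rfl⟩, p⟩, rfl⟩

/-- Evaluation of a (twisted) morphism on paths. -/
def pthVal {i : V} (X : QuivRep K V A t h) (x : X.sp i)
    (ψ : ∀ a, (Pth t h i (t a) →₀ K) →ₗ[K] X.sp (h a)) : ∀ j, Pth t h i j → X.sp j
  | _, Pth.nil => x
  | _, Pth.snoc a p => X.map a (pthVal X x ψ (t a) p) + ψ a (Finsupp.single p 1)

theorem exists_proj (K : Type) [Field K] (hac : ∀ i, ¬ Relation.TransGen (arr t h) i i) (i : V) :
    ∃ (P : QuivRep K V A t h) (e : P.sp i), ∀ (X : QuivRep K V A t h) (x : X.sp i)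
      (ψ : ∀ a, P.sp (t a) →ₗ[K] X.sp (h a)), ∃ φ : ∀ j, P.sp j →ₗ[K] X.sp j,
        φ i e = x ∧ ∀ a p, φ (h a) (P.map a p) - X.map a (φ (t a) p) = ψ a p := by
  have hfin := pth_finite hac i
  refine ⟨{ sp := fun j => Pth t h i j →₀ K,
            map := fun a => Finsupp.lmapDomain K K (Pth.snoc a) }, Finsupp.single Pth.nil 1, ?_⟩
  intro X x ψ
  refine ⟨fun j => Finsupp.linearCombination K (pthVal X x ψ j), ?_, ?_⟩
  · rw [Finsupp.linearCombination_single, one_smul]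
    rfl
  · intro a p
    rw [Finsupp.lmapDomain_apply, Finsupp.linearCombination_mapDomain, sub_eq_iff_eq_add]
    induction p using Finsupp.induction_linear with
    | zero => simp
    | add p q hp hq =>
      rw [map_add, hp, hq, map_add, map_add, map_add]
      abel
    | single p c =>
      have e : (Finsupp.single p c : Pth t h i (t a) →₀ K) = c • Finsupp.single p 1 := by
        rw [Finsupp.smul_single, smul_eq_mul, mul_one]
      rw [e, map_smul, map_smul, map_smul, map_smul, ← smul_add,
        Finsupp.linearCombination_single, Finsupp.linearCombination_single, one_smul, one_smul]
      congr 1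
      exact add_comm _ _

/-- Extensions. -/
theorem exists_extension {M B : QuivRep K V A t h} (ψ : ∀ a, M.sp (t a) →ₗ[K] B.sp (h a)) :
    ∃ (B' : QuivRep K V A t h) (ι : ∀ i, B.sp i →ₗ[K] B'.sp i)
      (π : ∀ i, B'.sp i →ₗ[K] M.sp i) (s : ∀ i, M.sp i →ₗ[K] B'.sp i)
      (r : ∀ i, B'.sp i →ₗ[K] B.sp i),
      IsHom B B' ι ∧ IsHom B' M π ∧ (∀ i x, r i (ι i x) = x) ∧ (∀ i x, π i (ι i x) = 0) ∧
      (∀ i x, π i (s i x) = x) ∧ (∀ i x, r i (s i x) = 0) ∧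
      (∀ i y, y = ι i (r i y) + s i (π i y)) ∧
      (∀ a m, B'.map a (s (t a) m) = s (h a) (M.map a m) + ι (h a) (ψ a m)) := by
  refine ⟨{ sp := fun i => B.sp i × M.sp i,
            map := fun a => ((B.map a).comp (LinearMap.fst K _ _) +
              (ψ a).comp (LinearMap.snd K _ _)).prod ((M.map a).comp (LinearMap.snd K _ _)) },
    fun i => LinearMap.inl K _ _, fun i => LinearMap.snd K _ _, fun i => LinearMap.inr K _ _,
    fun i => LinearMap.fst K _ _, ?_, ?_, ?_, ?_, ?_, ?_, ?_, ?_⟩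
  · intro a x; simp
  · intro a x; simp
  · intro i x; simp
  · intro i x; simp
  · intro i x; simp
  · intro i x; simp
  · intro i x; simp
  · intro a x; simp

/-! ### The right perpendicular category -/

/-- The right perpendicular category of `M`. -/
def Perp (M X : QuivRep K V A t h) : Prop := HomZ M X ∧ ExtZ M X

/-- Relative projectives. -/
def PerpProj (M P : QuivRep K V A t h) : Prop := ∀ X, Perp M X → ExtZ P X

theorem homZ_of_inj {M X Y : QuivRep K V A t h} (f : ∀ i, X.sp i →ₗ[K] Y.sp i)
    (hf : IsHom X Y f) (hi : ∀ i, Function.Injective (f i)) (H : HomZ M Y) : HomZ M X := by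
  intro g hg i x
  apply hi
  rw [map_zero]
  exact H _ (isHom_comp hg hf) i x

theorem homZ_of_surj {M X Y : QuivRep K V A t h} (f : ∀ i, X.sp i →ₗ[K] Y.sp i)
    (hf : IsHom X Y f) (hs : ∀ i, Function.Surjective (f i)) (H : HomZ X M) : HomZ Y M := by
  intro g hg i y
  obtain ⟨x, rfl⟩ := hs i y
  exact H _ (isHom_comp hf hg) i x

theorem perp_ker {M X Y L : QuivRep K V A t h} (hX : Perp M X) (hY : HomZ M Y)
    (f : ∀ i, X.sp i →ₗ[K] Y.sp i) (hf : IsHom X Y f)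
    (j : ∀ i, L.sp i →ₗ[K] X.sp i) (hj : IsHom L X j) (hi : ∀ i, Function.Injective (j i))
    (hr : ∀ i, LinearMap.range (j i) = LinearMap.ker (f i)) : Perp M L := by
  refine ⟨homZ_of_inj j hj hi hX.1, ?_⟩
  intro ψ
  obtain ⟨φ, hφ⟩ := hX.2 (fun a => (j (h a)).comp (ψ a))
  have hfj : ∀ i x, f i (j i x) = 0 := by
    intro i x
    have : j i x ∈ LinearMap.ker (f i) := by rw [← hr]; exact ⟨x, rfl⟩
    exact this
  have hz := hY (fun i => (f i).comp (φ i)) (by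
    intro a x
    have := congrArg (f (h a)) (hφ a x)
    rw [map_sub, LinearMap.comp_apply, hfj, sub_eq_zero, hf] at this
    exact this)
  choose φ' hφ' using fun i => lin_corestrict (j i) (hi i) (φ i)
    (fun x => by rw [hr]; exact hz i x)
  refine ⟨φ', fun a x => ?_⟩
  apply hi
  rw [map_sub, hφ', hj, hφ', hφ]
  rfl

theorem stepA {M B : QuivRep K V A t h} (hM : ExtZ M M) (hne : ¬ ExtZ M B) :
    ∃ B' : QuivRep K V A t h, QuivRep.extDim M B' < QuivRep.extDim M B ∧
      (∀ X, ExtZ M X → ExtZ B X → ExtZ B' X) ∧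
      (∀ X, ExtZ M X → ¬ HomZ B X → ¬ HomZ B' X) := by
  have hns : ¬ Function.Surjective (QuivRep.dmap M B) := by
    intro H
    apply hne
    intro ψ
    obtain ⟨φ, hφ⟩ := H ψ
    exact ⟨φ, fun a x => LinearMap.congr_fun (congrFun hφ a) x⟩
  unfold Function.Surjective at hns
  push Not at hns
  obtain ⟨ψ, hψ⟩ := hns
  obtain ⟨B', ι, π, s, r, hι, hπ, hrι, hπι, hπs, hrs, hdec, hmap⟩ := exists_extension ψ
  refine ⟨B', ?_, ?_, ?_⟩
  · let G : (∀ a : A, M.sp (t a) →ₗ[K] B.sp (h a)) →ₗ[K] (∀ a : A, M.sp (t a) →ₗ[K] B'.sp (h a)) :=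
      { toFun := fun χ a => (ι (h a)).comp (χ a)
        map_add' := by intro x y; funext a; ext m; simp
        map_smul' := by intro c y; funext a; ext m; simp }
    have hG : LinearMap.range (QuivRep.dmap M B) ≤
        (LinearMap.range (QuivRep.dmap M B')).comap G := by
      rintro _ ⟨φ, rfl⟩
      refine ⟨fun i => (ι i).comp (φ i), ?_⟩
      funext a
      ext m
      simp [G, QuivRep.dmap, hι a]
    let g := (LinearMap.range (QuivRep.dmap M B)).mapQ (LinearMap.range (QuivRep.dmap M B')) G hG
    have hgs : Function.Surjective g := by
      intro y
      obtain ⟨Ψ, rfl⟩ := Submodule.mkQ_surjective _ y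
      obtain ⟨χ, hχ⟩ := hM (fun a => (π (h a)).comp (Ψ a))
      refine ⟨Submodule.mkQ _ (fun a => (r (h a)).comp (Ψ a) + (ψ a).comp (χ (t a))), ?_⟩
      simp only [g, Submodule.mkQ_apply, Submodule.mapQ_apply]
      rw [Submodule.Quotient.eq]
      refine ⟨fun i => - (s i).comp (χ i), ?_⟩
      funext a
      ext m
      have e1 := hdec (h a) (Ψ a m)
      have e2 := hχ a m
      rw [LinearMap.comp_apply] at e2
      rw [← e2, map_sub] at e1
      simp only [QuivRep.dmap, G, LinearMap.coe_mk, AddHom.coe_mk, LinearMap.sub_apply,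
        LinearMap.comp_apply, LinearMap.neg_apply, LinearMap.add_apply, Pi.sub_apply, map_add,
        map_neg]
      rw [hmap]
      generalize (ι (h a)) ((r (h a)) ((Ψ a) m)) = z at e1 ⊢
      rw [e1]
      abel
    have hni : ¬ Function.Injective g := by
      intro hinj
      have : g (Submodule.mkQ _ ψ) = g 0 := by
        rw [map_zero]
        simp only [g, Submodule.mkQ_apply, Submodule.mapQ_apply]
        rw [Submodule.Quotient.mk_eq_zero]
        refine ⟨fun i => - s i, ?_⟩
        funext a
        ext m
        simp only [QuivRep.dmap, G, LinearMap.coe_mk, AddHom.coe_mk, LinearMap.sub_apply,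
          LinearMap.comp_apply, LinearMap.neg_apply, map_neg]
        rw [hmap]
        abel
      have := hinj this
      rw [Submodule.mkQ_apply, Submodule.Quotient.mk_eq_zero] at this
      obtain ⟨φ, hφ⟩ := this
      exact hψ φ hφ
    have hle := LinearMap.finrank_le_finrank_of_surjective hgs
    refine lt_of_le_of_ne hle ?_
    intro heq
    exact hni ((LinearMap.injective_iff_surjective_of_finrank_eq_finrank heq.symm).2 hgs)
  · intro X hMX hBX Ψ
    obtain ⟨φ, hφ⟩ := hBX (fun a => (Ψ a).comp (ι (t a)))
    obtain ⟨χ, hχ⟩ := hMX (fun a => (Ψ a).comp (s (t a)) - (φ (h a)).comp (ψ a))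
    refine ⟨fun i => (φ i).comp (r i) + (χ i).comp (π i), fun a y => ?_⟩
    have e1 := hφ a (r (t a) y)
    have e2 := hχ a (π (t a) y)
    have e3 := congrArg (Ψ a) (hdec (t a) y)
    have e4 : r (h a) (B'.map a y) = B.map a (r (t a) y) + ψ a (π (t a) y) := by
      conv_lhs => rw [hdec (t a) y, map_add, ← hι, hmap]
      rw [map_add, map_add, hrι, hrs, hrι, zero_add]
    simp only [LinearMap.comp_apply, LinearMap.sub_apply, LinearMap.add_apply] at e1 e2 ⊢
    rw [e3, map_add, e4, hπ, map_add, map_add, ← e1]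
    rw [sub_eq_iff_eq_add] at e2
    rw [e2]
    abel
  · intro X hMX hBX H
    apply hBX
    intro f hf i x
    obtain ⟨χ, hχ⟩ := hMX (fun a => - (f (h a)).comp (ψ a))
    have hh := H (fun i => (f i).comp (r i) + (χ i).comp (π i)) (by
      intro a y
      have e2 := hχ a (π (t a) y)
      have e4 : r (h a) (B'.map a y) = B.map a (r (t a) y) + ψ a (π (t a) y) := by
        conv_lhs => rw [hdec (t a) y, map_add, ← hι, hmap]
        rw [map_add, map_add, hrι, hrs, hrι, zero_add]
      simp only [LinearMap.comp_apply, LinearMap.neg_apply, LinearMap.add_apply] at e2 ⊢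
      rw [e4, hπ, map_add, map_add, ← hf]
      rw [sub_eq_iff_eq_add] at e2
      rw [e2]
      abel) i (ι i x)
    simpa [hrι, hπι] using hh

theorem exists_min {T : Type 1} (Q : T → Prop) (f : T → ℕ) (hne : ∃ x, Q x) :
    ∃ x, Q x ∧ ∀ y, Q y → f x ≤ f y := by
  classical
  have hex : ∃ n, ∃ x, Q x ∧ f x = n := by
    obtain ⟨x, hx⟩ := hne
    exact ⟨f x, x, hx, rfl⟩
  obtain ⟨x, hx, hfx⟩ := Nat.find_spec hex
  refine ⟨x, hx, fun y hy => ?_⟩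
  rw [hfx]
  exact Nat.find_min' hex ⟨y, hy, rfl⟩

/-- total dimension -/
def tot (X : QuivRep K V A t h) : ℕ := ∑ i, X.dimVec i

theorem tot_lt {X Y : QuivRep K V A t h} (d : V → ℕ) (hd : ∀ i, X.dimVec i + d i = Y.dimVec i)
    (hne : d ≠ fun _ => 0) : tot X < tot Y := by
  unfold tot
  obtain ⟨i, hi⟩ := Function.ne_iff.1 hne
  apply Finset.sum_lt_sum
  · intro i _
    have := hd i
    omega
  · refine ⟨i, Finset.mem_univ _, ?_⟩
    have := hd i
    have : d i ≠ 0 := hi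
    omega

theorem imSub_ne {X Y : QuivRep K V A t h} (f : ∀ i, X.sp i →ₗ[K] Y.sp i) (hf : IsHom X Y f)
    (hne : ¬ ∀ i x, f i x = 0) : (imSub f hf).dimVec ≠ fun _ => 0 := by
  intro H
  apply hne
  intro i x
  have h1 : f i x ∈ (imSub f hf).sub i := ⟨x, rfl⟩
  rw [sub_eq_bot_of _ H] at h1
  exact (Submodule.mem_bot K).1 h1

theorem not_homZ {X Y : QuivRep K V A t h} (H : ¬ HomZ X Y) :
    ∃ f : ∀ i, X.sp i →ₗ[K] Y.sp i, IsHom X Y f ∧ ¬ ∀ i x, f i x = 0 := by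
  unfold HomZ at H
  push Not at H
  obtain ⟨f, hf, i, x, hx⟩ := H
  exact ⟨f, hf, fun H => hx (H i x)⟩

theorem exists_B (hac : ∀ i, ¬ Relation.TransGen (arr t h) i i) {M S : QuivRep K V A t h}
    (hM : ExtZ M M) (hS : Perp M S) (hS0 : S.dimVec ≠ fun _ => 0) :
    ∃ B : QuivRep K V A t h, (PerpProj M B ∧ ¬ HomZ B S) ∧ ExtZ M B := by
  have hne : ∃ B : QuivRep K V A t h, PerpProj M B ∧ ¬ HomZ B S := by
    obtain ⟨i, x, hx⟩ := nonzero_vertex hS0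
    obtain ⟨P, e, hP⟩ := exists_proj K hac i
    refine ⟨P, ?_, ?_⟩
    · intro X _ ψ
      obtain ⟨φ, -, hφ⟩ := hP X 0 ψ
      exact ⟨φ, hφ⟩
    · intro H
      obtain ⟨φ, h1, hφ⟩ := hP S x (fun a => 0)
      apply hx
      rw [← h1]
      exact H φ (fun a x => sub_eq_zero.1 (hφ a x)) i e
  obtain ⟨B, hB, hmin⟩ := exists_min _ (fun B => QuivRep.extDim M B) hne
  refine ⟨B, hB, ?_⟩
  by_contra H
  obtain ⟨B', hlt, h1, h2⟩ := stepA hM H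
  have := hmin B' ⟨fun X hX => h1 X hX.2 (hB.1 X hX), h2 S hS.2 hB.2⟩
  omega

theorem exists_P (hac : ∀ i, ¬ Relation.TransGen (arr t h) i i) {M S : QuivRep K V A t h}
    (hM : ExtZ M M) (hS : Perp M S) (hS0 : S.dimVec ≠ fun _ => 0) :
    ∃ P : QuivRep K V A t h, Perp M P ∧ PerpProj M P ∧ ¬ HomZ P S := by
  obtain ⟨B, ⟨⟨hB1, hB2⟩, hB3⟩, hmin⟩ := exists_min _ (fun B => tot B) (exists_B hac hM hS hS0)
  refine ⟨B, ⟨?_, hB3⟩, hB1, hB2⟩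
  by_contra H
  obtain ⟨f, hf, hfne⟩ := not_homZ H
  obtain ⟨B', p, hp, hps, hpk, hpd⟩ := exists_quot (imSub f hf)
  have hlt : tot B' < tot B := tot_lt _ hpd (imSub_ne f hf hfne)
  have hpf : ∀ i x, p i (f i x) = 0 := by
    intro i x
    have : f i x ∈ LinearMap.ker (p i) := by rw [hpk]; exact ⟨x, rfl⟩
    exact this
  have hker : ∀ X, HomZ M X → ∀ g : ∀ i, B.sp i →ₗ[K] X.sp i,
      (∀ a x, g (h a) (B.map a (f (t a) x)) = X.map a (g (t a) (f (t a) x))) →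
      ∀ i y, p i y = 0 → g i y = 0 := by
    intro X hX g hg i y hy
    have : y ∈ (imSub f hf).sub i := by rw [← hpk]; exact hy
    obtain ⟨x, rfl⟩ := this
    refine hX (fun i => (g i).comp (f i)) ?_ i x
    intro a x
    simp only [LinearMap.comp_apply]
    rw [hf, hg]
  have := hmin B' ⟨⟨?_, ?_⟩, ext_of_surj p hp hps hB3⟩
  · omega
  · intro X hX ψ
    obtain ⟨φ, hφ⟩ := hB1 X hX (fun a => (ψ a).comp (p (t a)))
    choose φ' hφ' using fun i => lin_factor (p i) (hps i) (φ i) (hker X hX.1 φ (by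
      intro a x
      have := hφ a (f (t a) x)
      rw [LinearMap.comp_apply, hpf, map_zero, sub_eq_zero] at this
      exact this) i)
    refine ⟨φ', fun a y => ?_⟩
    obtain ⟨x, rfl⟩ := hps _ y
    rw [← hp, hφ', hφ', hφ]
    rfl
  · intro HB
    apply hB2
    intro g hg
    choose g' hg' using fun i => lin_factor (p i) (hps i) (g i) (hker S hS.1 g (by
      intro a x
      rw [hg]) i)
    intro i x
    rw [← hg']
    refine HB g' ?_ i _
    intro a y
    obtain ⟨x, rfl⟩ := hps _ y
    rw [← hp, hg', hg', hg]

/-- The key properties of the projective cover of a stable object `S`. -/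
theorem exists_cover [IsAlgClosed K] (hac : ∀ i, ¬ Relation.TransGen (arr t h) i i)
    {M : QuivRep K V A t h} (hM : ExtZ M M) {σ : V → ℤ}
    (hσ : ∀ d : V → ℕ, wt σ d = eulerForm t h (natZ M.dimVec) (natZ d))
    {S : QuivRep K V A t h} (hS : IsStable K σ S) (hSp : Perp M S) :
    ∃ P : QuivRep K V A t h, PerpProj M P ∧ QuivRep.homDim P S = 1 ∧ ExtZ S S ∧
      ∀ S', IsStable K σ S' → Perp M S' → HomZ S' S → HomZ P S' := by
  obtain ⟨P, ⟨hP1, hP2, hP3⟩, hmin⟩ :=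
    exists_min _ (fun B => tot B) (exists_P hac hM hSp hS.2.1)
  -- nonzero maps to stable objects are surjective
  have hsurj : ∀ S', IsStable K σ S' → Perp M S' → ∀ f : ∀ i, P.sp i →ₗ[K] S'.sp i,
      IsHom P S' f → (¬ ∀ i x, f i x = 0) → ∀ i, Function.Surjective (f i) := by
    intro S' hS' hSp' f hf hne
    obtain ⟨I, p, j, hp, hj, hps, hji, hjp, hd⟩ := exists_im f hf
    have e1 := (homZ_iff M I).2 (homZ_of_inj j hj hji hSp'.1)
    have e2 := (extZ_iff M I).2 (ext_of_surj p hp hps hP1.2)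
    have e3 := euler_hom_ext M I
    rw [e1, e2, ← hσ, hd] at e3
    have him : (imSub f hf).dimVec = S'.dimVec := by
      by_contra H
      have : wt σ (imSub f hf).dimVec < 0 := hS'.2.2 _ (imSub_ne f hf hne) H
      omega
    intro i
    exact LinearMap.range_eq_top.1 (sub_eq_top_of _ him i)
  -- maps from `P` to `S` factor through every nonzero map to a stable
  have hfac : ∀ S', IsStable K σ S' → Perp M S' → ∀ f : ∀ i, P.sp i →ₗ[K] S'.sp i,
      IsHom P S' f → (¬ ∀ i x, f i x = 0) → ∀ g : ∀ i, P.sp i →ₗ[K] S.sp i,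
      (∀ a x, f (t a) x = 0 → g (h a) (P.map a x) = S.map a (g (t a) x)) →
      ∃ g' : ∀ i, S'.sp i →ₗ[K] S.sp i, ∀ i x, g' i (f i x) = g i x := by
    intro S' hS' hSp' f hf hne g hg
    obtain ⟨L, j, hj, hji, hjr, hjd⟩ := exists_sub (kerSub f hf)
    have hfj : ∀ i x, f i (j i x) = 0 := by
      intro i x
      have : j i x ∈ (kerSub f hf).sub i := by rw [← hjr]; exact ⟨x, rfl⟩
      exact this
    have hlt : tot L < tot P := by
      refine tot_lt (imSub f hf).dimVec ?_ (imSub_ne f hf hne)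
      intro i
      rw [hjd, add_comm]
      exact im_add_ker f hf i
    have hLS : HomZ L S := by
      by_contra H
      have := hmin L ⟨perp_ker hP1 hSp'.1 f hf j hj hji hjr,
        fun X hX => ext_of_inj j hj hji (hP2 X hX), H⟩
      omega
    have hz := hLS (fun i => (g i).comp (j i)) (by
      intro a x
      simp only [LinearMap.comp_apply]
      rw [hj, hg _ _ (hfj _ _)])
    choose g' hg' using fun i => lin_factor (f i) (hsurj S' hS' hSp' f hf hne i) (g i) (by
      intro x hx
      have : x ∈ LinearMap.range (j i) := by rw [hjr]; exact hx
      obtain ⟨y, rfl⟩ := this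
      exact hz i y)
    exact ⟨g', hg'⟩
  have hfacH : ∀ S', IsStable K σ S' → Perp M S' → ∀ f : ∀ i, P.sp i →ₗ[K] S'.sp i,
      IsHom P S' f → (¬ ∀ i x, f i x = 0) → ∀ g : ∀ i, P.sp i →ₗ[K] S.sp i, IsHom P S g →
      ∃ g' : ∀ i, S'.sp i →ₗ[K] S.sp i, IsHom S' S g' ∧ ∀ i x, g' i (f i x) = g i x := by
    intro S' hS' hSp' f hf hne g hg
    obtain ⟨g', hg'⟩ := hfac S' hS' hSp' f hf hne g (fun a x _ => hg a x)
    refine ⟨g', ?_, hg'⟩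
    intro a y
    obtain ⟨x, rfl⟩ := hsurj S' hS' hSp' f hf hne _ y
    rw [← hf, hg', hg', hg]
  obtain ⟨f, hf, hfne⟩ := not_homZ hP3
  refine ⟨P, hP2, ?_, ?_, ?_⟩
  · refine homDim_one f hf hfne ?_
    intro g hg
    obtain ⟨g', hg'h, hg'⟩ := hfacH S hS hSp f hf hfne g hg
    obtain ⟨c, hc⟩ := stable_end hS g' hg'h
    refine ⟨c, fun i x => ?_⟩
    rw [← hg', hc]
  · intro ψ
    obtain ⟨φ, hφ⟩ := hP2 S hSp (fun a => (ψ a).comp (f (t a)))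
    obtain ⟨φ', hφ'⟩ := hfac S hS hSp f hf hfne φ (by
      intro a x hx
      have := hφ a x
      rw [LinearMap.comp_apply, hx, map_zero, sub_eq_zero] at this
      exact this)
    refine ⟨φ', fun a y => ?_⟩
    obtain ⟨x, rfl⟩ := hsurj S hS hSp f hf hfne _ y
    rw [← hf, hφ', hφ', hφ]
    rfl
  · intro S' hS' hSp' hz
    by_contra H
    obtain ⟨f', hf', hfne'⟩ := not_homZ H
    obtain ⟨g', hg'h, hg'⟩ := hfacH S' hS' hSp' f' hf' hfne' f hf
    apply hfne
    intro i x
    rw [← hg']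
    exact hz g' hg'h i _

theorem stable_perp {M : QuivRep K V A t h} (hM : ExtZ M M) {σ : V → ℤ}
    (hσ : ∀ d : V → ℕ, wt σ d = eulerForm t h (natZ M.dimVec) (natZ d))
    {S : QuivRep K V A t h} (hS : IsStable K σ S) : Perp M S := by
  have h1 : HomZ M S := by
    by_contra H
    obtain ⟨f, hf, hne⟩ := not_homZ H
    obtain ⟨I, p, j, hp, hj, hps, hji, hjp, hd⟩ := exists_im f hf
    have e2 := (extZ_iff M I).2 (ext_of_surj p hp hps hM)
    have e1 : QuivRep.homDim M I ≠ 0 := by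
      rw [Ne, homZ_iff]
      intro H
      apply hne
      intro i x
      rw [← hjp, H p hp, map_zero]
    have e3 := euler_hom_ext M I
    rw [e2, ← hσ, hd] at e3
    by_cases him : (imSub f hf).dimVec = S.dimVec
    · have h0 : wt σ S.dimVec = 0 := hS.1
      rw [him, h0] at e3
      omega
    · have : wt σ (imSub f hf).dimVec < 0 := hS.2.2 _ (imSub_ne f hf hne) him
      omega
  refine ⟨h1, ?_⟩
  rw [← extZ_iff]
  have e1 := (homZ_iff M S).2 h1
  have e3 := euler_hom_ext M S
  have h0 : wt σ S.dimVec = 0 := hS.1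
  rw [e1, ← hσ, h0] at e3
  omega

theorem repIso_symm {X Y : QuivRep K V A t h} (H : RepIso K X Y) : RepIso K Y X := by
  obtain ⟨e, he⟩ := H
  refine ⟨fun i => (e i).symm, fun a x => ?_⟩
  rw [LinearEquiv.symm_apply_eq, he, LinearEquiv.apply_symm_apply]

theorem repIso_trans {X Y Z : QuivRep K V A t h} (H : RepIso K X Y) (H' : RepIso K Y Z) :
    RepIso K X Z := by
  obtain ⟨e, he⟩ := H
  obtain ⟨e', he'⟩ := H'
  refine ⟨fun i => (e i).trans (e' i), fun a x => ?_⟩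
  simp only [LinearEquiv.trans_apply]
  rw [he, he']

theorem family_bound [IsAlgClosed K] (hac : ∀ i, ¬ Relation.TransGen (arr t h) i i)
    {M : QuivRep K V A t h} (hM : ExtZ M M) (hM0 : M.dimVec ≠ fun _ => 0) {σ : V → ℤ}
    (hσ : ∀ d : V → ℕ, wt σ d = eulerForm t h (natZ M.dimVec) (natZ d))
    {l : ℕ} (E : Fin l → QuivRep K V A t h) (hE : ∀ j, IsStable K σ (E j))
    (hni : ∀ j k, j ≠ k → ¬ RepIso K (E j) (E k)) : l ≤ Fintype.card V - 1 := by
  have hp := fun j => stable_perp hM hσ (hE j)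
  choose P hP1 hP2 _ hP4 using fun j => exists_cover hac hM hσ (hE j) (hp j)
  have hval : ∀ j k, eulerForm t h (natZ (P j).dimVec) (natZ (E k).dimVec)
      = if j = k then 1 else 0 := by
    intro j k
    rw [← euler_hom_ext, (extZ_iff _ _).2 (hP1 j _ (hp k))]
    split_ifs with hjk
    · subst hjk
      rw [hP2]
      rfl
    · rw [(homZ_iff _ _).2 (hP4 j _ (hE k) (hp k) (by
        by_contra H
        exact hni k j (Ne.symm hjk) (stable_iso (hE k) (hE j) H)))]
      rfl
  let v : Fin l → (V → ℚ) := fun k i => ((E k).dimVec i : ℚ)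
  have hvQ : ∀ j k, eulerForm t h (natQ (P j).dimVec) (v k) = if j = k then 1 else 0 := by
    intro j k
    have := congrArg (Int.cast : ℤ → ℚ) (hval j k)
    simp only [eulerForm, natZ, natQ, v] at this ⊢
    push_cast at this
    exact this
  let F : (V → ℚ) →ₗ[ℚ] ℚ :=
    { toFun := fun x => ∑ i, (σ i : ℚ) * x i
      map_add' := by intro x y; simp [mul_add, Finset.sum_add_distrib]
      map_smul' := by
        intro c x
        simp only [Pi.smul_apply, smul_eq_mul, RingHom.id_apply, Finset.mul_sum]
        exact Finset.sum_congr rfl fun i _ => by ring }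
  have hFv : ∀ k, v k ∈ LinearMap.ker F := by
    intro k
    have := congrArg (Int.cast : ℤ → ℚ) (hE k).1
    push_cast at this
    exact this
  have hF : F ≠ 0 := by
    intro H
    have h1 : F (natQ M.dimVec) = 0 := by rw [H]; rfl
    have h2 : wt σ M.dimVec = 0 := by
      have : ((wt σ M.dimVec : ℤ) : ℚ) = 0 := by
        unfold wt
        push_cast
        exact h1
      exact_mod_cast this
    rw [hσ, ← euler_hom_ext, (extZ_iff _ _).2 hM] at h2
    have h3 : QuivRep.homDim M M = 0 := by omega
    obtain ⟨i, x, hx⟩ := nonzero_vertex hM0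
    exact hx ((homZ_iff _ _).1 h3 (fun _ => LinearMap.id) (fun a x => rfl) i x)
  have hlin : LinearIndependent ℚ (fun k => (⟨v k, hFv k⟩ : LinearMap.ker F)) := by
    rw [Fintype.linearIndependent_iff]
    intro c hc j
    have hc' : ∑ k, c k • v k = 0 := by
      have := congrArg Subtype.val hc
      simpa using this
    have h1 : eulerForm t h (natQ (P j).dimVec) (∑ k, c k • v k)
        = ∑ k, c k * eulerForm t h (natQ (P j).dimVec) (v k) := by
      simp only [eulerForm, Finset.sum_apply, Pi.smul_apply, smul_eq_mul, mul_sub,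
        Finset.sum_sub_distrib, Finset.mul_sum]
      rw [Finset.sum_comm, Finset.sum_comm (s := (Finset.univ : Finset A))]
      congr 1 <;>
      exact Finset.sum_congr rfl fun k _ => Finset.sum_congr rfl fun i _ => by ring
    rw [hc'] at h1
    simp only [hvQ] at h1
    simpa [eulerForm] using h1.symm
  have h1 := hlin.fintype_card_le_finrank
  have h2 := Module.Dual.finrank_ker_add_one_of_ne_zero hF
  rw [Module.finrank_fintype_fun_eq_card] at h2
  rw [Fintype.card_fin] at h1
  omega

theorem mainL [IsAlgClosed K] (hac : ∀ i, ¬ Relation.TransGen (arr t h) i i)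
    {M : QuivRep K V A t h} (hM : ExtZ M M) (hM0 : M.dimVec ≠ fun _ => 0) {σ : V → ℤ}
    (hσ : ∀ d : V → ℕ, wt σ d = eulerForm t h (natZ M.dimVec) (natZ d)) :
    ∃ (l : ℕ) (E : Fin l → QuivRep K V A t h),
      l ≤ Fintype.card V - 1 ∧
      (∀ j, IsStable K σ (E j) ∧ (E j).IsExceptional) ∧
      (∀ j k, j ≠ k → ¬ RepIso K (E j) (E k)) ∧
      (∀ W : QuivRep K V A t h, IsStable K σ W → ∃ j, RepIso K W (E j)) := by
  classical
  let p : ℕ → Prop := fun l => ∃ E : Fin l → QuivRep K V A t h,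
    (∀ j, IsStable K σ (E j)) ∧ (∀ j k, j ≠ k → ¬ RepIso K (E j) (E k))
  have hb : ∀ l, p l → l ≤ Fintype.card V - 1 := by
    rintro l ⟨E, h1, h2⟩
    exact family_bound hac hM hM0 hσ E h1 h2
  have h0 : p 0 := ⟨fun j => j.elim0, fun j => j.elim0, fun j => j.elim0⟩
  have hspec : p (Nat.findGreatest p (Fintype.card V - 1)) :=
    Nat.findGreatest_spec (Nat.zero_le _) h0
  have hmax : ∀ m, p m → m ≤ Nat.findGreatest p (Fintype.card V - 1) :=
    fun m hm => Nat.le_findGreatest (hb m hm) hm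
  generalize Nat.findGreatest p (Fintype.card V - 1) = l at hspec hmax
  have hl := hb l hspec
  obtain ⟨E, h1, h2⟩ := hspec
  refine ⟨l, E, hl, ?_, h2, ?_⟩
  · intro j
    refine ⟨h1 j, ?_, stable_schur (h1 j)⟩
    obtain ⟨P, -, -, hS, -⟩ := exists_cover hac hM hσ (h1 j) (stable_perp hM hσ (h1 j))
    exact (extZ_iff _ _).2 hS
  · intro W hW
    by_contra H
    push Not at H
    have : p (l + 1) := by
      refine ⟨Fin.cons W E, ?_, ?_⟩
      · intro j
        refine Fin.cases ?_ (fun j => ?_) j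
        · exact hW
        · exact h1 j
      · intro j k
        refine Fin.cases ?_ (fun j => ?_) j <;> refine Fin.cases ?_ (fun k => ?_) k
        · intro h; exact absurd rfl h
        · intro _; exact H k
        · intro _ h; exact H j (repIso_symm h)
        · intro h
          exact h2 j k (fun e => h (by rw [e]))
    have := hmax _ this
    omega

/-! ### Duality -/

/-- The dual representation of the opposite quiver. -/
def dualRep (X : QuivRep K V A t h) : QuivRep K V A h t where
  sp i := Module.Dual K (X.sp i)
  map a := (X.map a).dualMap

theorem dualRep_dimVec (X : QuivRep K V A t h) : (dualRep X).dimVec = X.dimVec := by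
  funext i
  exact Subspace.dual_finrank_eq

theorem dualRep_iso {X Y : QuivRep K V A t h} (H : RepIso K X Y) :
    RepIso K (dualRep Y) (dualRep X) := by
  obtain ⟨e, he⟩ := H
  refine ⟨fun i => (e i).dualMap, fun a f => ?_⟩
  refine LinearMap.ext fun x => ?_
  let f' : Y.sp (h a) →ₗ[K] K := f
  exact congrArg f' (he a x).symm

theorem dualRep_dualRep (X : QuivRep K V A t h) : RepIso K X (dualRep (dualRep X)) :=
  ⟨fun i => Module.evalEquiv K (X.sp i), fun a x => rfl⟩

theorem dualRep_rigid {X : QuivRep K V A t h} (H : ExtZ X X) :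
    ExtZ (dualRep X) (dualRep X) := by
  intro ψ
  let Ψ : ∀ a, Module.Dual K (X.sp (h a)) →ₗ[K] Module.Dual K (X.sp (t a)) := ψ
  have hex : ∀ a, ∃ χ : X.sp (t a) →ₗ[K] X.sp (h a), ∀ (f : Module.Dual K (X.sp (h a)))
      (x : X.sp (t a)), Ψ a f x = f (χ x) := by
    intro a
    let ψ' : Module.Dual K (X.sp (h a)) →ₗ[K] Module.Dual K (X.sp (t a)) := Ψ a
    refine ⟨(Module.evalEquiv K (X.sp (h a))).symm.toLinearMap.comp
      (ψ'.dualMap.comp (Module.evalEquiv K (X.sp (t a))).toLinearMap), fun f x => ?_⟩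
    change ψ' f x = f ((Module.evalEquiv K (X.sp (h a))).symm
      (ψ'.dualMap (Module.evalEquiv K (X.sp (t a)) x)))
    rw [Module.apply_evalEquiv_symm_apply]
    rfl
  choose χ hχ using hex
  obtain ⟨φ, hφ⟩ := H χ
  refine ⟨fun i => - (φ i).dualMap, fun a f₀ => ?_⟩
  let f : X.sp (h a) →ₗ[K] K := f₀
  refine LinearMap.ext fun x => ?_
  refine Eq.trans ?_ (hχ a f x).symm
  rw [← hφ a x, map_sub]
  change - (f (X.map a (φ (t a) x))) - (- f (φ (h a) (X.map a x))) = _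
  ring

theorem dualRep_stable {σ : V → ℤ} {X : QuivRep K V A t h} (hX : IsStable K σ X) :
    IsStable K (fun i => - σ i) (dualRep X) := by
  have hneg : ∀ d, wt (fun i => - σ i) d = - wt σ d := by
    intro d
    simp [wt]
  have hX0 : wt σ X.dimVec = 0 := hX.1
  refine ⟨?_, ?_, ?_⟩
  · change wt (fun i => - σ i) (dualRep X).dimVec = 0
    rw [hneg, dualRep_dimVec, hX0, neg_zero]
  · rw [dualRep_dimVec]
    exact hX.2.1
  · intro U hU1 hU2
    rw [dualRep_dimVec] at hU2
    let us : ∀ i, Submodule K (Module.Dual K (X.sp i)) := U.sub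
    let U' : QuivRep.Sub X :=
      { sub := fun i => (us i).dualCoannihilator
        le := by
          intro a x hx
          rw [Submodule.mem_dualCoannihilator] at hx ⊢
          intro f hf
          exact hx _ (U.le a f hf) }
    have hd : ∀ i, U'.dimVec i + U.dimVec i = X.dimVec i := by
      intro i
      rw [add_comm]
      exact Subspace.finrank_add_finrank_dualCoannihilator_eq (us i)
    have h1 : U'.dimVec ≠ fun _ => 0 := by
      intro H
      apply hU2
      funext i
      have := hd i
      rw [H] at this
      simpa using this
    have h2 : U'.dimVec ≠ X.dimVec := by
      intro H
      apply hU1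
      funext i
      have := hd i
      rw [H] at this
      simpa using this
    have h3 : wt σ U'.dimVec < 0 := hX.2.2 U' h1 h2
    have h4 := wt_add σ hd
    change wt (fun i => - σ i) U.dimVec < 0
    rw [hneg]
    -- the stability inequality changes sign twice
    have h5 : wt σ U.dimVec = - wt σ U'.dimVec := by omega
    omega

theorem weightL_wt (t h : A → V) (α d : V → ℕ) :
    wt (weightL t h (natZ α)) d = eulerForm t h (natZ α) (natZ d) := by
  unfold wt weightL eulerForm natZ
  simp only [mul_ite, mul_one, mul_zero, Finset.sum_ite_eq', Finset.mem_univ, if_true, sub_mul,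
    Finset.sum_sub_distrib, Finset.sum_mul]
  congr 1
  rw [Finset.sum_comm]
  refine Finset.sum_congr rfl fun a _ => ?_
  simp

theorem weightR_eq (t h : A → V) (α : V → ℤ) :
    (fun i => - weightR t h α i) = weightL h t α := by
  funext i
  unfold weightR weightL eulerForm
  rw [neg_neg]
  congr 1 <;> exact Finset.sum_congr rfl fun _ _ => mul_comm _ _

theorem acyclic_transGen (hQ : Acyclic t h) (i : V) : ¬ Relation.TransGen (arr t h) i i := by
  have key : ∀ u v, Relation.TransGen (arr t h) u v →
      ∃ p : List A, p ≠ [] ∧ IsPathFrom t h u p v := by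
    intro u v H
    induction H using Relation.TransGen.head_induction_on with
    | single H =>
      obtain ⟨a, rfl, rfl⟩ := H
      exact ⟨[a], by simp, rfl, rfl⟩
    | head H _ ih =>
      obtain ⟨a, rfl, rfl⟩ := H
      obtain ⟨p, -, hp⟩ := ih
      exact ⟨a :: p, by simp, rfl, hp⟩
  intro H
  obtain ⟨p, hp, hp'⟩ := key i i H
  exact hp (hQ i p hp')

theorem arr_swap (hac : ∀ i, ¬ Relation.TransGen (arr t h) i i) (i : V) :
    ¬ Relation.TransGen (arr h t) i i := by
  intro H
  apply hac i
  have e : arr h t = Function.swap (arr t h) := by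
    funext u v
    apply propext
    constructor
    · rintro ⟨a, h1, h2⟩; exact ⟨a, h2, h1⟩
    · rintro ⟨a, h1, h2⟩; exact ⟨a, h2, h1⟩
  rw [e, Relation.transGen_swap] at H
  exact H

end Helpers

/-- For a non-zero pre-homogeneous `α` and `σ = ⟨α,·⟩` or `−⟨·,α⟩` there
are, up to isomorphism, finitely many `σ`-stable representations `E_1, …, E_l`, with
`l ≤ |Q_0| − 1`, and each of them is exceptional. -/
theorem stmt3 [IsAlgClosed K] [CharZero K] (t h : A → V) (hQ : Acyclic t h)
    (α : V → ℕ) (hα : α ≠ (fun _ => 0))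
    (hpre : ∃ X : QuivRep K V A t h, X.dimVec = α ∧ X.IsRigid)
    (σ : V → ℤ) (hσ : σ = weightL t h (natZ α) ∨ σ = weightR t h (natZ α)) :
    ∃ (l : ℕ) (E : Fin l → QuivRep K V A t h),
      l ≤ Fintype.card V - 1 ∧
      (∀ j, IsStable K σ (E j) ∧ (E j).IsExceptional) ∧
      (∀ j k, j ≠ k → ¬ RepIso K (E j) (E k)) ∧
      (∀ W : QuivRep K V A t h, IsStable K σ W → ∃ j, RepIso K W (E j)) := by
  have hac := acyclic_transGen hQ
  obtain ⟨M, hMα, hM⟩ := hpre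
  have hM' : ExtZ M M := (extZ_iff M M).1 hM
  rcases hσ with rfl | rfl
  · refine mainL hac hM' (by rw [hMα]; exact hα) ?_
    intro d
    rw [hMα]
    exact weightL_wt t h α d
  · obtain ⟨l, E, hl, h1, h2, h3⟩ := mainL (σ := weightL h t (natZ α)) (arr_swap hac)
      (dualRep_rigid hM') (by rw [dualRep_dimVec, hMα]; exact hα) (by
        intro d
        rw [dualRep_dimVec, hMα]
        exact weightL_wt h t α d)
    have hneg : (fun i => - weightL h t (natZ α) i) = weightR t h (natZ α) := by
      rw [← weightR_eq]
      funext i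
      exact neg_neg _
    have hst : ∀ j, IsStable K (weightR t h (natZ α)) (dualRep (E j)) := by
      intro j
      rw [← hneg]
      exact dualRep_stable (h1 j).1
    refine ⟨l, fun j => dualRep (E j), hl, ?_, ?_, ?_⟩
    · intro j
      exact ⟨hst j, (extZ_iff _ _).2 (dualRep_rigid ((extZ_iff _ _).1 (h1 j).2.1)),
        stable_schur (hst j)⟩
    · intro j k hjk H
      exact h2 j k hjk (repIso_trans (dualRep_dualRep _)
        (repIso_trans (repIso_symm (dualRep_iso H)) (repIso_symm (dualRep_dualRep _))))
    · intro W hW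
      obtain ⟨j, hj⟩ := h3 (dualRep W) (by
        rw [← weightR_eq]
        exact dualRep_stable hW)
      exact ⟨j, repIso_trans (dualRep_dualRep W) (repIso_symm (dualRep_iso hj))⟩

end
end
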